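/- arXiv:1812.04705 — 2 statements merged into one kernel-verified Lean document; each statement's English description precedes it below -/
import Mathlib

section
/- Let α be a partition with all parts at least 2, let p = (p_1,…,p_{ℓ(α)−1},0) be the overlapping partition of the monotone ribbon R_α^p, and let ν be a partition of |α|. Then the Littlewood–Richardson coefficient c_{R_α^p}^ν is positive — i.e. there exists an LR tableau of shape R_α^p and content ν — if and only if ν lies in the dominance-order interval [α, (|α|−p_1, p_1)] and ν_i ≤ Σ_{q=i}^{ℓ(α)} α_q − p_i for every 1 ≤ i ≤ ℓ(p). -/
namespace RibbonSupport

/-- A partition: a weakly decreasing list of positive integers. -/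
def IsPartition (a : List ℕ) : Prop := a.Pairwise (· ≥ ·) ∧ ∀ x ∈ a, 0 < x

/-- All parts of the list are at least `m`. -/
def PartsGE (a : List ℕ) (m : ℕ) : Prop := ∀ x ∈ a, m ≤ x

/-- Dominance order `lam ⪯ mu` on partitions of the same size. -/
def DomLE (lam mu : List ℕ) : Prop :=
  lam.sum = mu.sum ∧ ∀ i, (lam.take i).sum ≤ (mu.take i).sum

/-- The number of nonzero parts. -/
def lenp (p : List ℕ) : ℕ := p.countP (fun x => decide (x ≠ 0))

/-- `p` is an overlapping partition for the monotone ribbon with row lengths `a`: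
`p` has the same length as `a`, its last entry is `0`, and consecutive entries
decrease by `0` or `1`. -/
def IsOverlapSeq (a p : List ℕ) : Prop :=
  p.length = a.length ∧ p.getD (a.length - 1) 0 = 0 ∧
    ∀ i, i + 1 < a.length →
      p.getD i 0 = p.getD (i + 1) 0 ∨ p.getD i 0 = p.getD (i + 1) 0 + 1

/-- Rows `i` and `i+1` (0-based, top to bottom) of `R_a^p` overlap
(share exactly one column) exactly when `p_i = p_{i+1} + 1`. -/
def ovOf (p : List ℕ) : ℕ → Bool := fun i => decide (p.getD i 0 = p.getD (i + 1) 0 + 1)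

def rowOffset (a : List ℕ) (i : ℕ) : ℕ := (a.take i).sum

/-- `w` is the reading word (rows right-to-left, top to bottom) of a semistandard filling of
the ribbon with row lengths `a` (top to bottom) in which consecutive rows `i`, `i+1` share
exactly one column when `ov i = true` and no column otherwise.  Semistandardness amounts to:
within each row block the word is weakly decreasing (rows weakly increase left to right), and
at each overlapping gap the word strictly increases (columns strictly increase downwards). -/
def IsRibbonWord (a : List ℕ) (ov : ℕ → Bool) (w : List ℕ) : Prop :=
  w.length = a.sum ∧
  (∀ i j, i < a.length → j + 1 < a.getD i 0 →
    w.getD (rowOffset a i + j + 1) 0 ≤ w.getD (rowOffset a i + j) 0) ∧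
  (∀ i, i + 1 < a.length → ov i = true →
    w.getD (rowOffset a (i + 1) - 1) 0 < w.getD (rowOffset a (i + 1)) 0)

/-- Yamanouchi (lattice) word: each prefix has at least as many letters `j` as `j+1`. -/
def IsYam (w : List ℕ) : Prop := ∀ k j, (w.take k).count (j + 2) ≤ (w.take k).count (j + 1)

/-- The word `w` has content `nu` (and only positive letters). -/
def HasContent (w : List ℕ) (nu : List ℕ) : Prop :=
  (∀ j, w.count (j + 1) = nu.getD j 0) ∧ w.count 0 = 0

/-- There is an LR filling of the ribbon `(a, ov)` with content `nu`. -/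
def InSupportOv (a : List ℕ) (ov : ℕ → Bool) (nu : List ℕ) : Prop :=
  ∃ w : List ℕ, IsRibbonWord a ov w ∧ IsYam w ∧ HasContent w nu

/-- `nu` is in the Schur support of the monotone ribbon `R_a^p`. -/
def InSupport (a p nu : List ℕ) : Prop := InSupportOv a (ovOf p) nu

/-- `nu` is in the Schur support of the connected ribbon `R_a`. -/
def InSupportConn (a nu : List ℕ) : Prop := InSupportOv a (fun _ => true) nu

/-- `nu` belongs to the Schur interval `[a, (|a| - p₁, p₁)]` in dominance order. -/
def InInterval (a p nu : List ℕ) : Prop :=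
  DomLE a nu ∧ DomLE nu [a.sum - p.getD 0 0, p.getD 0 0]

/-- The Schur support of `R_a^p`, as a set of partitions. -/
def SupportSet (a p : List ℕ) : Set (List ℕ) := {nu | IsPartition nu ∧ InSupport a p nu}

/-- The Schur interval of `R_a^p`, as a set of partitions. -/
def IntervalSet (a p : List ℕ) : Set (List ℕ) := {nu | IsPartition nu ∧ InInterval a p nu}

/-- `R_a^p` has full Schur support. -/
def FullSupport (a p : List ℕ) : Prop := SupportSet a p = IntervalSet a p

/-- The Schur support of the connected ribbon `R_a`, as a set of partitions. -/
def SupportSetConn (a : List ℕ) : Set (List ℕ) := {nu | IsPartition nu ∧ InSupportConn a nu}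

/-- `ϱ_i` (1-based `i`): `Σ_{q=i+1}^{ℓ(a)} a_q − p_{i+1} + 1`. -/
def rho (a p : List ℕ) (i : ℕ) : ℕ := (a.drop i).sum + 1 - p.getD i 0

/-- Entry `j` (1-based) of the `i`-witness vector: `[ϱ_i − a_j]₊`. -/
def wit (a p : List ℕ) (i j : ℕ) : ℕ := rho a p i - a.getD (j - 1) 0

/-- Size of the `i`-witness vector. -/
def witSize (a p : List ℕ) (i : ℕ) : ℕ := ∑ j ∈ Finset.Icc 1 i, wit a p i j

/-! ### Tableaux -/

/-- Cells (0-based `(row, column)`) of the Young diagram of `lam`. -/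
def cells (lam : List ℕ) : Finset (ℕ × ℕ) :=
  (Finset.range lam.length ×ˢ Finset.range (lam.sum + 1)).filter
    (fun x => x.2 < lam.getD x.1 0)

/-- `T` is a semistandard Young tableau of shape `lam` and content `al`
(normalized to vanish off the diagram). -/
def IsTab (lam al : List ℕ) (T : ℕ × ℕ → ℕ) : Prop :=
  (∀ x, x ∉ cells lam → T x = 0) ∧
  (∀ x ∈ cells lam, 1 ≤ T x) ∧
  (∀ i c, (i, c + 1) ∈ cells lam → T (i, c) ≤ T (i, c + 1)) ∧
  (∀ i c, (i + 1, c) ∈ cells lam → T (i, c) < T (i + 1, c)) ∧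
  (∀ k, ((cells lam).filter (fun x => T x = k + 1)).card = al.getD k 0)

/-- Standardization of a tableau: entries are renumbered `1, …, N` in increasing order of
value, entries of equal value being numbered from southwest to northeast (by column). -/
def stdz (lam : List ℕ) (T : ℕ × ℕ → ℕ) : ℕ × ℕ → ℕ := fun x =>
  if x ∈ cells lam then
    ((cells lam).filter (fun y => T y < T x ∨ (T y = T x ∧ y.2 < x.2))).card + 1
  else 0

/-- `n` is a descent of the standard tableau `U`: the entry `n+1` lies in a strictly
lower row than the entry `n`. -/
def IsDescent (lam : List ℕ) (U : ℕ × ℕ → ℕ) (n : ℕ) : Prop :=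
  ∃ x ∈ cells lam, ∃ y ∈ cells lam, U x = n ∧ U y = n + 1 ∧ x.1 < y.1

/-- `S(al)`: the set of proper partial sums of the composition `al`. -/
def Sset (al : List ℕ) : Set ℕ := {n | ∃ k, 0 < k ∧ k < al.length ∧ n = (al.take k).sum}

/-- `s ∈ D(T)`: some entry `s+1` of `T` lies in a strictly lower row than some entry `s`. -/
def TabDescent (lam : List ℕ) (T : ℕ × ℕ → ℕ) (s : ℕ) : Prop :=
  ∃ x ∈ cells lam, ∃ y ∈ cells lam, T x = s ∧ T y = s + 1 ∧ x.1 < y.1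

/-- The word `w_{T̂}` of `T`: its `u`-th letter (1-based) is the 1-based row index of the
entry `u` of the standardization `T̂` of `T`. -/
def wordOf (lam : List ℕ) (T : ℕ × ℕ → ℕ) : List ℕ :=
  (List.range lam.sum).map fun n =>
    ∑ x ∈ (cells lam).filter (fun x => stdz lam T x = n + 1), (x.1 + 1)

/-- `j ∈ {2, …, ℓ(al)}` is a critical number of `T ∈ Tab(lam, al)`:
`w_{α_1+⋯+α_{j-1}} = w_{α_1+⋯+α_{j-1}+1}` in the word of `T`. -/
def CriticalNum (lam al : List ℕ) (T : ℕ × ℕ → ℕ) (j : ℕ) : Prop :=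
  2 ≤ j ∧ j ≤ al.length ∧
    (wordOf lam T).getD ((al.take (j - 1)).sum - 1) 0 =
      (wordOf lam T).getD ((al.take (j - 1)).sum) 0

/-- `j ∈ {2, …, ℓ(al)}` is a negligible critical number of `T`:
`w_{α_1+⋯+α_{j-1}} > w_{α_1+⋯+α_{j-1}+1}` in the word of `T`. -/
def NegligibleNum (lam al : List ℕ) (T : ℕ × ℕ → ℕ) (j : ℕ) : Prop :=
  2 ≤ j ∧ j ≤ al.length ∧
    (wordOf lam T).getD ((al.take (j - 1)).sum) 0 <
      (wordOf lam T).getD ((al.take (j - 1)).sum - 1) 0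

/-- The overlapping partition of the ribbon encoded by its gap pattern `b`
(`b j = true` iff rows `j` and `j+1`, 0-based, overlap). -/
def povOf (b : List Bool) : List ℕ :=
  (List.range (b.length + 1)).map fun i => (b.drop i).count true

/-! ### Connected ribbons with rows in arbitrary order -/

/-- Starting column (0-based) of row `i` of the connected ribbon with row lengths `b`. -/
def startConn (b : List ℕ) (i : ℕ) : ℕ := (b.drop (i + 1)).sum + (i + 1) - b.length

/-- Number of columns of the connected ribbon with row lengths `b`. -/
def ncols (b : List ℕ) : ℕ := b.sum + 1 - b.length

/-- Length of column `c` of the connected ribbon with row lengths `b`. -/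
def colLen (b : List ℕ) (c : ℕ) : ℕ :=
  ((Finset.range b.length).filter
    (fun i => startConn b i ≤ c ∧ c < startConn b i + b.getD i 0)).card

/-- Deletion rank of row `j`: the number of rows deleted strictly before row `j` when one
repeatedly deletes a longest remaining row in highest (most northern) position. -/
def delRank (g : List ℕ) (j : ℕ) : ℕ :=
  ((Finset.range g.length).filter
    (fun j' => g.getD j 0 < g.getD j' 0 ∨ (g.getD j' 0 = g.getD j 0 ∧ j' < j))).card

/-- The overlapping partition of the connected ribbon with row lengths `g`:
its `(d+1)`-st entry is the number of length-two columns of the ribbon remaining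
after deleting `d` rows as above, i.e. the number of adjacent pairs of surviving rows. -/
def ppiList (g : List ℕ) : List ℕ :=
  (List.range g.length).map fun d =>
    ((Finset.range (g.length - 1)).filter
      (fun j => d ≤ delRank g j ∧ d ≤ delRank g (j + 1))).card



/-! ### Sums over initial segments -/

theorem sum_diff_lower (f : ℕ → ℕ) (x k : ℕ) (hxk : x ≤ k)
    (h : ∀ i, x ≤ i → i < k → 1 ≤ f i) :
    (∑ i ∈ Finset.range x, f i) + (k - x) ≤ ∑ i ∈ Finset.range k, f i := by
  induction k, hxk using Nat.le_induction with
  | base => simp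
  | succ k hk ih =>
    rw [Finset.sum_range_succ]
    have h1 := ih (fun i h1 h2 => h i h1 (by omega))
    have h2 := h k hk (by omega)
    omega

theorem sum_diff_eq (f g v : ℕ → ℕ) (x k : ℕ) (hxk : x ≤ k)
    (h : ∀ i, x ≤ i → i < k → f i + g i = v i) :
    (∑ i ∈ Finset.range k, f i) + (∑ i ∈ Finset.range k, g i) + (∑ i ∈ Finset.range x, v i)
      = (∑ i ∈ Finset.range k, v i) + (∑ i ∈ Finset.range x, f i)
        + (∑ i ∈ Finset.range x, g i) := by
  induction k, hxk using Nat.le_induction with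
  | base => omega
  | succ k hk ih =>
    simp only [Finset.sum_range_succ]
    have h1 := ih (fun i h1 h2 => h i h1 (by omega))
    have h2 := h k hk (by omega)
    omega

theorem sum_mono (f : ℕ → ℕ) {x k : ℕ} (hxk : x ≤ k) :
    (∑ i ∈ Finset.range x, f i) ≤ ∑ i ∈ Finset.range k, f i := by
  induction k, hxk using Nat.le_induction with
  | base => exact le_rfl
  | succ k hk ih => rw [Finset.sum_range_succ]; omega

/-- Greedy selection of a sequence between given bounds with given partial-sum lower bounds. -/
theorem select (L : ℕ) : ∀ (lo hi B : ℕ → ℕ) (M : ℕ),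
    (∀ i < L, lo i ≤ hi i) →
    (∀ k ≤ L, B k ≤ ∑ i ∈ Finset.range k, hi i) →
    (∀ k ≤ L, B k + ∑ i ∈ Finset.range L, lo i ≤ M + ∑ i ∈ Finset.range k, lo i) →
    M ≤ ∑ i ∈ Finset.range L, hi i →
    ∃ κ : ℕ → ℕ, (∀ i < L, lo i ≤ κ i ∧ κ i ≤ hi i) ∧ (∀ i, L ≤ i → κ i = 0) ∧
      (∑ i ∈ Finset.range L, κ i) = M ∧ ∀ k ≤ L, B k ≤ ∑ i ∈ Finset.range k, κ i := by
  induction L with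
  | zero =>
    intro lo hi B M _ h2 _ h4
    refine ⟨fun _ => 0, by simp, by simp, ?_, ?_⟩
    · simp at h4 ⊢; omega
    · intro k hk
      have := h2 k hk
      have hk0 : k = 0 := by omega
      subst hk0
      simpa using this
  | succ L ih =>
    intro lo hi B M h1 h2 h3 h4
    have hlohi : ∀ k ≤ L, (∑ i ∈ Finset.range k, lo i) ≤ ∑ i ∈ Finset.range k, hi i := by
      intro k hk
      apply Finset.sum_le_sum
      intro i hi'
      exact h1 i (by have := Finset.mem_range.1 hi'; omega)
    have hL := h1 L (by omega)
    have h3' := fun k hk => h3 k hk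
    simp only [Finset.sum_range_succ _ L] at h3' h4
    have h30 := h3' 0 (by omega)
    simp at h30
    have hll := hlohi L le_rfl
    set t := max (lo L) (M - ∑ i ∈ Finset.range L, hi i) with ht
    have htM : t ≤ M := by omega
    have hcase : ∀ k ≤ L, (∑ i ∈ Finset.range L, lo i) + ∑ i ∈ Finset.range k, hi i
        ≤ (∑ i ∈ Finset.range L, hi i) + ∑ i ∈ Finset.range k, lo i := by
      intro k hk
      induction L, hk using Nat.le_induction with
      | base => omega
      | succ m hm _ =>
        clear ih
        have key : ∀ m', k ≤ m' → m' ≤ m + 1 → (∑ i ∈ Finset.range m', lo i) + ∑ i ∈ Finset.range k, hi i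
            ≤ (∑ i ∈ Finset.range m', hi i) + ∑ i ∈ Finset.range k, lo i := by
          intro m' hkm
          induction m', hkm using Nat.le_induction with
          | base => intro _; omega
          | succ j hj ihj =>
            intro hj2
            have := ihj (by omega)
            have := h1 j (by omega)
            simp only [Finset.sum_range_succ _ j]
            omega
        exact key (m + 1) (by omega) le_rfl
    obtain ⟨κ, k1, k2, k3, k4⟩ := ih lo hi B (M - t) (fun i hi' => h1 i (by omega))
      (fun k hk => h2 k (by omega))
      (by
        intro k hk
        have e1 := h3' k (by omega)
        have e2 := h2 k (by omega)
        have e3 := hcase k hk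
        omega)
      (by omega)
    have hsum : ∀ k ≤ L, (∑ i ∈ Finset.range k, (if i = L then t else κ i))
        = ∑ i ∈ Finset.range k, κ i := by
      intro k hk
      apply Finset.sum_congr rfl
      intro i hi'
      have := Finset.mem_range.1 hi'
      rw [if_neg (by omega)]
    refine ⟨fun i => if i = L then t else κ i, ?_, ?_, ?_, ?_⟩
    · intro i hi'
      by_cases h : i = L
      · subst h; simp only [if_true]; omega
      · simp only [if_neg h]; exact k1 i (by omega)
    · intro i hi'
      have hne : i ≠ L := by omega
      simp only [if_neg hne]; exact k2 i (by omega)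
    · rw [Finset.sum_range_succ, hsum L le_rfl, k3]; simp; omega
    · intro k hk
      by_cases h : k ≤ L
      · rw [hsum k h]; exact k4 k h
      · have hk' : k = L + 1 := by omega
        subst hk'
        rw [Finset.sum_range_succ, hsum L le_rfl, k3]
        have := h3 (L+1) le_rfl
        simp; omega

/-- The key inequality for the selection of the strip to be removed. -/
theorem hi_prefix (l : ℕ) (α q S ν hi e : ℕ → ℕ) (n : ℕ)
    (hα : Antitone α) (hα2 : ∀ i < l, 2 ≤ α i)
    (hS : ∀ i, S i = α i + S (i + 1)) (hS0 : ∀ i, l ≤ i → S i = 0)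
    (hq : ∀ i, q i = q (i + 1) ∨ q i = q (i + 1) + 1) (hq0 : ∀ i, l ≤ i + 1 → q i = 0)
    (hν : Antitone ν)
    (hdom : ∀ k, ∑ i ∈ Finset.range k, α i ≤ ∑ i ∈ Finset.range k, ν i)
    (htot : ∀ k, n < k → ∑ i ∈ Finset.range k, ν i = S 0)
    (hb : ∀ i, ν i + q i ≤ S i)
    (hn : 0 < ν n) (hn' : ν (n + 1) = 0)
    (he : ∀ i, e i = if i = n ∧ q 0 = q 1 + 1 then 1 else 0)
    (hhi : ∀ i, hi i = min (ν i - e i) (S (i + 1) - q (i + 1)))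
    (k : ℕ) (hkl : k ≤ l) :
    ∑ i ∈ Finset.range k, α (i + 1) ≤ ∑ i ∈ Finset.range k, hi i := by
  have hSl : ∀ d i, i + d = l → 2 * d ≤ S i := by
    intro d
    induction d with
    | zero => intro i _; omega
    | succ d ih =>
      intro i hi'
      have h1 := ih (i + 1) (by omega)
      have h2 := hS i
      have h3 := hα2 i (by omega)
      omega
  have hql : ∀ d i, i + d + 1 = l → q i ≤ d := by
    intro d
    induction d with
    | zero => intro i hi'; rw [hq0 i (by omega)]
    | succ d ih =>
      intro i hi'
      have h1 := ih (i + 1) (by omega)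
      have h2 := hq i
      omega
  have F1 : ∀ i, i < l → 2 * (l - i) ≤ S i ∧ q i ≤ l - i - 1 := fun i h =>
    ⟨hSl _ _ (by omega), hql _ _ (by omega)⟩
  have F2 : ∀ i, l ≤ i → S i = 0 ∧ q i = 0 := fun i h => ⟨hS0 i h, hq0 i (by omega)⟩
  have hnl : n < l := by
    by_contra h
    have := hb n
    have := hS0 n (by omega)
    omega
  have hνz : ∀ i, n < i → ν i = 0 := fun i h => by
    have := hν (show n + 1 ≤ i by omega); omega
  have hνp : ∀ i, i ≤ n → 1 ≤ ν i := fun i h => by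
    have := hν h; omega
  have F3 : ∀ k, (∑ i ∈ Finset.range k, α i) + S k = S 0 := by
    intro k
    induction k with
    | zero => simp
    | succ k ih => rw [Finset.sum_range_succ]; have := hS k; omega
  have F4 : ∀ k, (∑ i ∈ Finset.range k, α (i + 1)) + S (k + 1) = S 1 := by
    intro k
    induction k with
    | zero => simp
    | succ k ih => rw [Finset.sum_range_succ]; have := hS (k + 1); omega
  have hα0 : ∀ i, α i ≤ α 0 := fun i => hα (Nat.zero_le i)
  have hS00 : S 0 = α 0 + S 1 := hS 0
  -- the indicator sums
  have hE : ∀ k, ∑ i ∈ Finset.range k, e i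
      = if n < k ∧ q 0 = q 1 + 1 then 1 else 0 := by
    intro k
    induction k with
    | zero => simp
    | succ k ih =>
      rw [Finset.sum_range_succ, ih, he k]
      split_ifs <;> omega
  have heN : ∀ i, e i ≤ ν i := by
    intro i
    rw [he i]
    split_ifs with h
    · rw [h.1]; exact hn
    · omega
  have hα00 := hα2 0 (by omega)
  have goal1 := F4 k
  by_cases hI : ∃ i, i < k ∧ S (i + 1) - q (i + 1) < ν i - e i
  · -- the first violated index
    obtain ⟨i0, ⟨hi0k, hi0⟩, hmin⟩ :
        ∃ i0, (i0 < k ∧ S (i0 + 1) - q (i0 + 1) < ν i0 - e i0) ∧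
          ∀ i, i < i0 → ¬ (i < k ∧ S (i + 1) - q (i + 1) < ν i - e i) := by
      classical
      exact ⟨Nat.find hI, Nat.find_spec hI, fun i h => Nat.find_min hI h⟩
    have hi0n : i0 ≤ n := by
      by_contra h
      have := hνz i0 (by omega)
      omega
    have hH0 : (∑ i ∈ Finset.range i0, hi i) = ∑ i ∈ Finset.range i0, ν i := by
      have h1 := sum_diff_eq hi e ν 0 i0 (by omega) (by
        intro i _ h
        have h2 := hmin i h
        have h3 := hhi i
        have h4 := heN i
        omega)
      have h2 := hE i0
      rw [if_neg (by omega)] at h2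
      simp at h1
      simp at h2
      have : (∑ i ∈ Finset.range i0, e i) = 0 := by
        apply Finset.sum_eq_zero; simpa using h2
      omega
    have hH1 : (∑ i ∈ Finset.range (i0 + 1), hi i)
        = (∑ i ∈ Finset.range i0, ν i) + (S (i0 + 1) - q (i0 + 1)) := by
      rw [Finset.sum_range_succ, hH0, hhi i0]
      omega
    have hN0 := hdom i0
    have hA0 := F3 i0
    have hSi0 := hS i0
    have hai0 := hα0 i0
    have hqS : 2 * q (i0 + 1) ≤ S (i0 + 1) := by
      by_cases h : i0 + 1 < l
      · have := F1 _ h; omega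
      · have := F2 (i0 + 1) (by omega); omega
    by_cases hkn : k ≤ n
    · have h1 := sum_diff_lower hi (i0 + 1) k (by omega) (by
        intro i h1 h2
        rw [hhi i, he i, if_neg (by omega)]
        have h3 := hνp i (by omega)
        have h4 := F1 (i + 1) (by omega)
        omega)
      have h2 := F1 (i0 + 1) (by omega)
      by_cases h : k + 1 < l
      · have := F1 (k + 1) h
        omega
      · have := F2 (k + 1) (by omega)
        omega
    · by_cases hI1 : ∃ i1, i0 < i1 ∧ i1 < k ∧ S (i1 + 1) - q (i1 + 1) < ν i1 - e i1
      · obtain ⟨i1, h01, h1k, hi1⟩ := hI1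
        have hi1n : i1 ≤ n := by
          by_contra h
          have := hνz i1 (by omega)
          omega
        have h1 := sum_diff_lower hi (i0 + 1) i1 (by omega) (by
          intro i h1 h2
          rw [hhi i, he i, if_neg (by omega)]
          have h3 := hνp i (by omega)
          have h4 := F1 (i + 1) (by omega)
          omega)
        have h2 := sum_mono hi (show i1 + 1 ≤ k by omega)
        have h3 : hi i1 = S (i1 + 1) - q (i1 + 1) := by rw [hhi i1]; omega
        rw [Finset.sum_range_succ, h3] at h2
        have h4 := F1 (i0 + 1) (by omega)
        by_cases h : i1 + 1 < l
        · have := F1 (i1 + 1) h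
          omega
        · have := F2 (i1 + 1) (by omega)
          omega
      · have h1 := sum_diff_eq hi e ν (i0 + 1) k (by omega) (by
          intro i h1 h2
          have h3 := hhi i
          have h4 := heN i
          have h5 : ¬ (S (i + 1) - q (i + 1) < ν i - e i) := fun h =>
            hI1 ⟨i, by omega, h2, h⟩
          omega)
        have h2 := htot k (by omega)
        rw [hE k, hE (i0 + 1), h2, hH1, Finset.sum_range_succ _ i0] at h1
        have hbi := hb i0
        have hqi := hq i0
        suffices hs : ν i0 + (if n < k ∧ q 0 = q 1 + 1 then 1 else 0) ≤
            α 0 + (S (i0 + 1) - q (i0 + 1)) +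
              (if n < i0 + 1 ∧ q 0 = q 1 + 1 then 1 else 0) by omega
        by_cases hin : i0 = n
        · split_ifs <;> omega
        by_cases hz : i0 = 0
        · subst hz
          simp only [Nat.zero_add] at hbi hSi0 hi0 hqi ⊢
          split_ifs <;> omega
        obtain ⟨j, rfl⟩ : ∃ j, i0 = j + 1 := ⟨i0 - 1, by omega⟩
        have g1 := hν (show j ≤ j + 1 by omega)
        have g2 := hdom j
        have g3 := F3 j
        have g4 := hS j
        have g5 := hα0 j
        have g6 := htot (n + 1) (by omega)
        rw [Finset.sum_range_succ] at g6
        have g7 := sum_mono ν (show j + 2 ≤ n by omega)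
        rw [Finset.sum_range_succ, Finset.sum_range_succ] at g7
        split_ifs <;> omega
  · have h1 := sum_diff_eq hi e ν 0 k (by omega) (by
      intro i _ h
      have h2 : ¬ (S (i + 1) - q (i + 1) < ν i - e i) := fun h' => hI ⟨i, h, h'⟩
      have h3 := hhi i
      have h4 := heN i
      omega)
    simp only [Finset.range_zero, Finset.sum_empty, add_zero] at h1
    rw [hE k] at h1
    have h2 := hdom k
    have h3 := F3 k
    have h4 := hS k
    have h5 := hα0 k
    by_cases hkn : n < k
    · have h6 := htot k hkn
      split_ifs at h1 <;> omega
    · rw [if_neg (by omega)] at h1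
      omega

/-- Selection of the shape obtained by removing the strip of the first row. -/
theorem step_shape (l : ℕ) (α q S ν : ℕ → ℕ) (n : ℕ)
    (hα : Antitone α) (hα2 : ∀ i < l, 2 ≤ α i)
    (hS : ∀ i, S i = α i + S (i + 1)) (hS0 : ∀ i, l ≤ i → S i = 0)
    (hq : ∀ i, q i = q (i + 1) ∨ q i = q (i + 1) + 1) (hq0 : ∀ i, l ≤ i + 1 → q i = 0)
    (hν : Antitone ν)
    (hdom : ∀ k, ∑ i ∈ Finset.range k, α i ≤ ∑ i ∈ Finset.range k, ν i)
    (htot : ∀ k, n < k → ∑ i ∈ Finset.range k, ν i = S 0)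
    (hb : ∀ i, ν i + q i ≤ S i)
    (hn : 0 < ν n) (hn' : ν (n + 1) = 0) :
    ∃ κ : ℕ → ℕ, (∀ i, ν (i + 1) ≤ κ i ∧ κ i ≤ ν i) ∧
      (∀ i, κ i + q (i + 1) ≤ S (i + 1)) ∧
      (∀ k, ∑ i ∈ Finset.range k, α (i + 1) ≤ ∑ i ∈ Finset.range k, κ i) ∧
      (∀ k, l ≤ k + 1 → ∑ i ∈ Finset.range k, κ i = S 1) ∧
      (q 0 = q 1 + 1 → κ n < ν n) ∧
      (ν n < ν 0 → ∃ j < n, κ j < ν j) := by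
  have hSl : ∀ d i, i + d = l → 2 * d ≤ S i := by
    intro d
    induction d with
    | zero => intro i _; omega
    | succ d ih =>
      intro i hi'
      have h1 := ih (i + 1) (by omega)
      have h2 := hS i
      have h3 := hα2 i (by omega)
      omega
  have hql : ∀ d i, i + d + 1 = l → q i ≤ d := by
    intro d
    induction d with
    | zero => intro i hi'; rw [hq0 i (by omega)]
    | succ d ih =>
      intro i hi'
      have h1 := ih (i + 1) (by omega)
      have h2 := hq i
      omega
  have F1 : ∀ i, i < l → 2 * (l - i) ≤ S i ∧ q i ≤ l - i - 1 := fun i h =>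
    ⟨hSl _ _ (by omega), hql _ _ (by omega)⟩
  have F2 : ∀ i, l ≤ i → S i = 0 ∧ q i = 0 := fun i h => ⟨hS0 i h, hq0 i (by omega)⟩
  have hqS : ∀ i, 2 * q i ≤ S i := by
    intro i
    by_cases h : i < l
    · have := F1 _ h; omega
    · have := F2 i (by omega); omega
  have hnl : n < l := by
    by_contra h
    have := hb n
    have := hS0 n (by omega)
    omega
  have hνz : ∀ i, n < i → ν i = 0 := fun i h => by
    have := hν (show n + 1 ≤ i by omega); omega
  have F3 : ∀ k, (∑ i ∈ Finset.range k, α i) + S k = S 0 := by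
    intro k
    induction k with
    | zero => simp
    | succ k ih => rw [Finset.sum_range_succ]; have := hS k; omega
  have F4 : ∀ k, (∑ i ∈ Finset.range k, α (i + 1)) + S (k + 1) = S 1 := by
    intro k
    induction k with
    | zero => simp
    | succ k ih => rw [Finset.sum_range_succ]; have := hS (k + 1); omega
  have hα0 : ∀ i, α i ≤ α 0 := fun i => hα (Nat.zero_le i)
  have hA0 : ∀ k, (∑ i ∈ Finset.range k, α i) ≤ k * α 0 := by
    intro k
    induction k with
    | zero => simp
    | succ k ih => rw [Finset.sum_range_succ]; have := hα0 k; linarith [add_mul k 1 (α 0)]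
  have hB0 : ∀ k, (∑ i ∈ Finset.range k, α (i + 1)) ≤ k * α 0 := by
    intro k
    induction k with
    | zero => simp
    | succ k ih => rw [Finset.sum_range_succ]; have := hα0 (k + 1); linarith [add_mul k 1 (α 0)]
  have hNn : ∀ k, k ≤ n → (∑ i ∈ Finset.range (k + 1), ν i) ≥ k * ν n + ν 0 := by
    intro k
    induction k with
    | zero => simp
    | succ k ih =>
      intro hk
      rw [Finset.sum_range_succ]
      have h1 := ih (by omega)
      have h2 := hν hk
      linarith [add_mul k 1 (ν n)]
  have hα00 := hα2 0 (by omega)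
  have hS00 : S 0 = α 0 + S 1 := hS 0
  -- bounds
  obtain ⟨e, he⟩ : ∃ e : ℕ → ℕ, ∀ i, e i = if i = n ∧ q 0 = q 1 + 1 then 1 else 0 :=
    ⟨_, fun i => rfl⟩
  obtain ⟨hi, hhi⟩ : ∃ hi : ℕ → ℕ, ∀ i, hi i = min (ν i - e i) (S (i + 1) - q (i + 1)) :=
    ⟨_, fun i => rfl⟩
  obtain ⟨x, hx⟩ : ∃ x : ℕ, x = if ν n < ν 0 then ν n + 1 - α 0 else 0 := ⟨_, rfl⟩
  obtain ⟨lo, hlo⟩ : ∃ lo : ℕ → ℕ, ∀ i, lo i = if i = n then x else ν (i + 1) :=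
    ⟨_, fun i => rfl⟩
  have hpre := hi_prefix l α q S ν hi e n hα hα2 hS hS0 hq hq0 hν hdom htot hb hn hn' he hhi
  have hxc : x ≤ S (n + 1) - q (n + 1) := by
    rw [hx]
    split_ifs with h
    · by_cases hge : ν n < α 0
      · omega
      have hn0 : n ≠ 0 := by rintro rfl; omega
      have g1 := hNn n le_rfl
      have g2 := htot (n + 1) (by omega)
      have g3 := F3 (n + 1)
      have g4 := hA0 (n + 1)
      -- S (n+1) ≥ (n+1) * (ν n - α 0) + 1
      obtain ⟨d, hd⟩ : ∃ d, ν n = α 0 + d := ⟨ν n - α 0, by omega⟩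
      have g5 : n * ν n = n * α 0 + n * d := by rw [hd]; ring
      have g6 : (n + 1) * α 0 = n * α 0 + α 0 := by ring
      have g7 : 1 * d ≤ n * d := Nat.mul_le_mul_right d (by omega)
      have g8 := hqS (n + 1)
      by_cases hl : n + 1 < l
      · have := F1 (n + 1) hl
        omega
      · have := F2 (n + 1) (by omega)
        omega
    · omega
  have hlosum : ∀ k, (∑ i ∈ Finset.range k, lo i) + ν 0 =
      (∑ i ∈ Finset.range (k + 1), ν i) + if n < k then x else 0 := by
    intro k
    induction k with
    | zero => simp
    | succ k ih =>
      rw [Finset.sum_range_succ, Finset.sum_range_succ _ (k + 1), hlo k]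
      by_cases hkn : k = n
      · subst hkn
        simp at ih ⊢
        omega
      · rw [if_neg hkn]
        split_ifs at ih ⊢ <;> omega
  obtain ⟨κ, k1, k2, k3, k4⟩ := select l lo hi (fun k => ∑ i ∈ Finset.range k, α (i + 1)) (S 1)
    (by
      intro i hil
      rw [hlo i, hhi i, he i]
      by_cases hin : i = n
      · subst hin
        simp only [true_and, if_true]
        have : x + 1 ≤ ν i := by rw [hx]; split_ifs <;> omega
        split_ifs <;> omega
      · rw [if_neg hin, if_neg (by omega)]
        have g1 := hb (i + 1)
        have g2 := hν (show i ≤ i + 1 by omega)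
        omega)
    hpre
    (by
      intro k hk
      have g1 := hlosum l
      have g2 := hlosum k
      rw [htot (l + 1) (by omega), if_pos hnl] at g1
      have g3 := F3 (k + 1)
      have g4 := F4 k
      have g5 := hdom (k + 1)
      by_cases hkn : n < k
      · rw [if_pos hkn] at g2
        omega
      · rw [if_neg hkn] at g2
        by_cases hx0 : x = 0
        · omega
        · have hx' : ν n < ν 0 ∧ x = ν n + 1 - α 0 := by
            by_cases h : ν n < ν 0
            · rw [if_pos h] at hx; exact ⟨h, hx⟩
            · rw [if_neg h] at hx; omega
          have g6 := hNn k (by omega)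
          have g7 := hB0 k
          have g8 : k * α 0 ≤ k * ν n := Nat.mul_le_mul_left k (by omega)
          omega)
    (by
      have g1 := hpre l le_rfl
      have g2 := F4 l
      rw [hS0 (l + 1) (by omega)] at g2
      omega)
  have hκν : ∀ i, ν (i + 1) ≤ κ i ∧ κ i ≤ ν i := by
    intro i
    by_cases hil : i < l
    · obtain ⟨g1, g2⟩ := k1 i hil
      rw [hlo i] at g1
      rw [hhi i] at g2
      refine ⟨?_, by omega⟩
      by_cases hin : i = n
      · subst hin; omega
      · rw [if_neg hin] at g1; exact g1
    · rw [k2 i (by omega), hνz (i + 1) (by omega)]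
      omega
  have hκS : ∀ i, κ i + q (i + 1) ≤ S (i + 1) := by
    intro i
    have g0 := hqS (i + 1)
    by_cases hil : i < l
    · obtain ⟨g1, g2⟩ := k1 i hil
      rw [hhi i] at g2
      omega
    · rw [k2 i (by omega)]; omega
  have hκz : ∀ i, l ≤ i + 1 → κ i = 0 := by
    intro i h
    have := hκS i
    have := hS0 (i + 1) h
    omega
  have hκtot : ∀ k, l ≤ k + 1 → ∑ i ∈ Finset.range k, κ i = S 1 := by
    intro k hk
    rw [← k3]
    have hz : ∀ k, l ≤ k + 1 → ∑ i ∈ Finset.range k, κ i = ∑ i ∈ Finset.range (l - 1), κ i := by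
      intro k hk
      have hk' : l - 1 ≤ k := by omega
      induction k, hk' using Nat.le_induction with
      | base => rfl
      | succ k hk2 ih =>
        rw [Finset.sum_range_succ, ih (by omega), hκz k (by omega), add_zero]
    rw [hz k hk, hz l (by omega)]
  refine ⟨κ, hκν, hκS, ?_, hκtot, ?_, ?_⟩
  · intro k
    by_cases h : k ≤ l
    · exact k4 k h
    · rw [hκtot k (by omega)]
      have := F4 k
      omega
  · intro hov
    have g2 := (k1 n hnl).2
    rw [hhi n, he n, if_pos ⟨rfl, hov⟩] at g2
    omega
  · intro hlt
    by_contra hcon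
    push Not at hcon
    have g1 := hκtot (n + 1)
    have g2 := htot (n + 1) (by omega)
    have g3 : (∑ i ∈ Finset.range n, κ i) = ∑ i ∈ Finset.range n, ν i := by
      apply Finset.sum_congr rfl
      intro i hi'
      have h1 := hcon i (Finset.mem_range.1 hi')
      have h2 := (hκν i).2
      omega
    have g4 : (∑ i ∈ Finset.range (l + n + 1), κ i) = ∑ i ∈ Finset.range (n + 1), κ i := by
      have : ∀ d, (∑ i ∈ Finset.range (n + 1 + d), κ i) = ∑ i ∈ Finset.range (n + 1), κ i := by
        intro d
        induction d with
        | zero => rfl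
        | succ d ih =>
          rw [← add_assoc, Finset.sum_range_succ, ih]
          have h1 := (hκν (n + 1 + d)).2
          rw [hνz (n + 1 + d) (by omega)] at h1
          omega
      rw [← this l]
      congr 2
      omega
    rw [hκtot (l + n + 1) (by omega), Finset.sum_range_succ, g3] at g4
    rw [Finset.sum_range_succ] at g2
    have g5 := (k1 n hnl).1
    rw [hlo n, if_pos rfl, hx, if_pos hlt] at g5
    omega

/-! ### Lifting Yamanouchi words along horizontal strips -/

theorem cnt_snoc (l : List ℕ) (x j : ℕ) :
    (l ++ [x]).count j = l.count j + if x = j then 1 else 0 := by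
  rw [List.count_append, List.count_singleton]
  simp

/-- `Lift m u w`: the word `w` starts with `m` zeros and continues with a lift of `u`. -/
inductive Lift (m : ℕ) : List ℕ → List ℕ → Prop
  | nil : Lift m [] (List.replicate m 0)
  | snoc (u w : List ℕ) (x y : ℕ) : Lift m u w →
      (∀ j, (w ++ [y]).count (j + 1) ≤ (u ++ [x]).count j ∧
        (u ++ [x]).count j ≤ (w ++ [y]).count j) →
      ((y = x ∧ (w ++ [y]).count (x + 1) < (u ++ [x]).count x) ∨
        (y = x + 1 ∧ (w ++ [y]).count (x + 1) = (u ++ [x]).count x)) →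
      Lift m (u ++ [x]) (w ++ [y])

theorem lift_exists (m K : ℕ) (u : List ℕ)
    (hu : ∀ k j, (u.take k).count (j + 1) ≤ (u.take k).count j) :
    ∀ μ : ℕ → ℕ, (∀ j, μ (j + 1) ≤ u.count j ∧ u.count j ≤ μ j) →
      (∀ i, K ≤ i → μ i = 0) → (∑ i ∈ Finset.range K, μ i = u.length + m) →
      ∃ w, Lift m u w ∧ ∀ j, w.count j = μ j := by
  induction u using List.reverseRecOn with
  | nil =>
    intro μ h1 h2 h3
    refine ⟨_, Lift.nil, ?_⟩
    have h1' : ∀ j, μ (j + 1) = 0 := fun j => by have := h1 j; simpa using this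
    have h0 : μ 0 = m := by
      cases K with
      | zero => simp at h3; rw [h2 0 le_rfl, h3]
      | succ K =>
        rw [Finset.sum_range_succ'] at h3
        rw [Finset.sum_eq_zero (fun i _ => h1' i)] at h3
        simpa using h3
    intro j
    cases j with
    | zero => simp [h0]
    | succ j => rw [h1' j]; simp [List.count_replicate]
  | append_singleton u x ih =>
    intro μ h1 h2 h3
    have hu0 : ∀ k j, (u.take k).count (j + 1) ≤ (u.take k).count j := by
      intro k j
      by_cases hk : k ≤ u.length
      · have := hu k j
        rwa [List.take_append_of_le_length hk] at this
      · have := hu u.length j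
        rw [List.take_append_of_le_length le_rfl] at this
        rw [List.take_of_length_le (by omega)]
        simpa using this
    have huu : ∀ j, u.count (j + 1) ≤ u.count j := by
      intro j; have := hu0 u.length j; simpa using this
    have key : ∀ y, 0 < μ y →
        (∀ j, μ (j + 1) - (if y = j + 1 then 1 else 0) ≤ u.count j ∧
          u.count j ≤ μ j - (if y = j then 1 else 0)) →
        ∃ w, Lift m u w ∧ ∀ j, (w ++ [y]).count j = μ j := by
      intro y hy hint
      have hyK : y < K := by
        by_contra h
        have := h2 y (by omega)
        omega
      obtain ⟨w, hw, hc⟩ := ih hu0 (fun j => μ j - (if y = j then 1 else 0)) hint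
        (by intro i hi; simp [h2 i hi])
        (by
          have e1 : (∑ i ∈ Finset.range K, (μ i - (if y = i then 1 else 0)))
              + (∑ i ∈ Finset.range K, (if y = i then 1 else 0)) = ∑ i ∈ Finset.range K, μ i := by
            rw [← Finset.sum_add_distrib]
            apply Finset.sum_congr rfl
            intro i _
            split_ifs with h
            · subst h; omega
            · omega
          rw [Finset.sum_ite_eq, if_pos (Finset.mem_range.2 hyK), h3] at e1
          simp only [List.length_append, List.length_singleton] at e1
          omega)
      refine ⟨w, hw, ?_⟩
      intro j
      rw [cnt_snoc, hc j]
      split_ifs with h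
      · subst h; omega
      · omega
    have h1' := h1
    simp only [cnt_snoc] at h1'
    by_cases hc : μ (x + 1) = (u ++ [x]).count x
    · have hc' := hc
      rw [cnt_snoc, if_pos rfl] at hc'
      obtain ⟨w, hw, hwc⟩ := key (x + 1) (by omega) (by
        intro j
        have e1 := h1' j
        have e2 := huu x
        have e3 := h1' (x + 1)
        constructor
        · split_ifs with h
          · have : j = x := by omega
            subst this; omega
          · rw [if_neg (by omega)] at e1; omega
        · split_ifs with h
          · subst h; omega
          · split_ifs at e1 <;> omega)
      refine ⟨w ++ [x + 1], Lift.snoc u w x (x + 1) hw ?_ (Or.inr ⟨rfl, ?_⟩), hwc⟩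
      · intro j; rw [hwc, hwc]; exact h1 j
      · rw [hwc]; exact hc
    · have e0 := h1' x
      rw [if_pos rfl] at e0
      have hc' := hc
      rw [cnt_snoc, if_pos rfl] at hc'
      obtain ⟨w, hw, hwc⟩ := key x (by omega) (by
        intro j
        have e1 := h1' j
        constructor
        · by_cases h : x = j
          · subst h; simp; omega
          · rw [if_neg h] at e1; omega
        · by_cases h : x = j
          · subst h; simp; omega
          · rw [if_neg h] at *; omega)
      refine ⟨w ++ [x], Lift.snoc u w x x hw ?_ (Or.inl ⟨rfl, ?_⟩), hwc⟩
      · intro j; rw [hwc, hwc]; exact h1 j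
      · rw [hwc, cnt_snoc, if_pos rfl]; omega

theorem lift_length {m : ℕ} {u w : List ℕ} (h : Lift m u w) : w.length = m + u.length := by
  induction h with
  | nil => simp
  | snoc u w x y _ _ _ ih => simp [ih]; omega

theorem lift_inter {m : ℕ} {u w : List ℕ} (h : Lift m u w) (j : ℕ) :
    w.count (j + 1) ≤ u.count j ∧ u.count j ≤ w.count j := by
  cases h with
  | nil => simp [List.count_replicate]
  | snoc u w x y _ h1 _ => exact h1 j

theorem lift_yam {m : ℕ} {u w : List ℕ} (h : Lift m u w) :
    ∀ k j, (w.take k).count (j + 1) ≤ (w.take k).count j := by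
  induction h with
  | nil => intro k j; simp [List.count_replicate]
  | snoc u w x y _ h1 _ ih =>
    intro k j
    by_cases hk : k ≤ w.length
    · rw [List.take_append_of_le_length hk]; exact ih k j
    · rw [List.take_of_length_le (by simp; omega)]
      have := h1 j
      omega

theorem getD_snoc_lt (l : List ℕ) (x k : ℕ) (h : k < l.length) :
    (l ++ [x]).getD k 0 = l.getD k 0 := by
  simp [List.getD_eq_getElem?_getD, List.getElem?_append_left h]

theorem getD_snoc_eq (l : List ℕ) (x k : ℕ) (h : k = l.length) :
    (l ++ [x]).getD k 0 = x := by
  subst h; simp [List.getD_eq_getElem?_getD]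

theorem lift_zeros {m : ℕ} {u w : List ℕ} (h : Lift m u w) :
    ∀ k, k < m → w.getD k 0 = 0 := by
  induction h with
  | nil =>
    intro k hk
    simp [List.getD_eq_getElem?_getD, hk]
  | snoc u w x y hl _ _ ih =>
    intro k hk
    rw [getD_snoc_lt _ _ _ (by have := lift_length hl; omega)]
    exact ih k hk

theorem lift_inv {m : ℕ} {v w : List ℕ} {y : ℕ} (h : Lift m (v ++ [y]) w) :
    ∃ w0 z, w = w0 ++ [z] ∧ Lift m v w0 ∧
      (∀ j, (w0 ++ [z]).count (j + 1) ≤ (v ++ [y]).count j ∧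
        (v ++ [y]).count j ≤ (w0 ++ [z]).count j) ∧
      ((z = y ∧ (w0 ++ [z]).count (y + 1) < (v ++ [y]).count y) ∨
        (z = y + 1 ∧ (w0 ++ [z]).count (y + 1) = (v ++ [y]).count y)) := by
  generalize hv : v ++ [y] = v' at h
  cases h with
  | nil => simp at hv
  | snoc u w x z h1 h2 h3 =>
    obtain ⟨rfl, hxy⟩ := List.append_inj' hv rfl
    simp at hxy
    subst hxy
    exact ⟨w, z, rfl, h1, h2, h3⟩

theorem lift_desc {m : ℕ} {u w : List ℕ} (h : Lift m u w) :
    ∀ k, k + 1 < u.length →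
      (u.getD (k + 1) 0 ≤ u.getD k 0 → w.getD (m + (k + 1)) 0 ≤ w.getD (m + k) 0) ∧
      (u.getD k 0 < u.getD (k + 1) 0 → w.getD (m + k) 0 < w.getD (m + (k + 1)) 0) := by
  induction h with
  | nil => intro k hk; simp at hk
  | snoc u w x y hl h1 h2 ih =>
    intro k hk
    have hlen := lift_length hl
    simp only [List.length_append, List.length_singleton] at hk
    by_cases hk' : k + 1 < u.length
    · rw [getD_snoc_lt u _ _ hk', getD_snoc_lt u _ _ (by omega), getD_snoc_lt w _ _ (by omega),
        getD_snoc_lt w _ _ (by omega)]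
      exact ih k hk'
    · rcases List.eq_nil_or_concat u with rfl | ⟨u0, x0, rfl⟩
      · simp at hk
      rw [List.concat_eq_append] at *
      obtain ⟨w0, y0, rfl, hl0, h10, h20⟩ := lift_inv hl
      simp only [List.length_append, List.length_singleton] at hk hk' hlen
      rw [getD_snoc_eq _ x _ (by simp; omega), getD_snoc_lt _ x _ (by simp; omega),
        getD_snoc_eq _ x0 _ (by omega), getD_snoc_eq _ y _ (by simp; omega),
        getD_snoc_lt _ y _ (by simp; omega), getD_snoc_eq _ y0 _ (by omega)]
      have g1 := h1 x0
      have g2 := h1 x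
      rw [cnt_snoc _ x, cnt_snoc _ y, cnt_snoc _ y] at g1 g2
      rw [cnt_snoc _ x, cnt_snoc _ y] at h2
      simp only [if_true] at h2 g2
      constructor
      · intro hx
        by_contra hy
        have hxx : x0 = x ∧ y0 = x ∧ y = x + 1 := by omega
        obtain ⟨rfl, rfl, rfl⟩ := hxx
        simp only [if_true] at h2
        omega
      · intro hx
        by_contra hy
        have hxx : x = x0 + 1 ∧ y0 = x0 + 1 ∧ y = x0 + 1 := by omega
        obtain ⟨rfl, rfl, rfl⟩ := hxx
        simp only [if_true] at g1
        simp only [Nat.succ_ne_self, if_false] at g1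
        omega

theorem lift_triple {m1 m2 : ℕ} {u v : List ℕ} (h : Lift m1 u v) :
    ∀ w, Lift m2 v w → ∀ a b, a < b → u.count a < v.count a → v.count b < w.count b →
      0 < w.getD m2 0 := by
  induction h with
  | nil =>
    intro w hw a b hab _ hb
    have hbw : b ∈ w := List.count_pos_iff.1 (by omega)
    obtain ⟨k, hk, hkb⟩ := List.getElem_of_mem hbw
    have hkb' : w.getD k 0 = b := by rw [List.getD_eq_getElem?_getD]; simp [hk, hkb]
    have hlen := lift_length hw
    simp only [List.length_replicate] at hlen
    have hkm : m2 ≤ k := by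
      by_contra h
      have := lift_zeros hw k (by omega)
      omega
    have hrep : ∀ i, i < m1 → (List.replicate m1 0).getD i 0 = 0 := by
      intro i hi; simp [List.getD_eq_getElem?_getD, hi]
    have hdec : ∀ i, i < m1 → w.getD (m2 + i) 0 ≤ w.getD m2 0 := by
      intro i
      induction i with
      | zero => intro _; exact le_rfl
      | succ i ih =>
        intro hi
        refine le_trans ((lift_desc hw i (by simpa using hi)).1 ?_) (ih (by omega))
        rw [hrep _ hi, hrep _ (by omega)]
    have := hdec (k - m2) (by omega)
    rw [show m2 + (k - m2) = k by omega, hkb'] at this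
    omega
  | snoc u v x y hl h1 h2 ih =>
    intro w hw a b hab ha hb
    obtain ⟨w0, z, rfl, hl0, g1, g2⟩ := lift_inv hw
    suffices hs : ∃ a' b', a' < b' ∧ u.count a' < v.count a' ∧ v.count b' < w0.count b' by
      obtain ⟨a', b', c1, c2, c3⟩ := hs
      have h3 := ih w0 hl0 a' b' c1 c2 c3
      by_cases hm : m2 < w0.length
      · rw [getD_snoc_lt _ _ _ hm]; exact h3
      · rw [List.getD_eq_default _ _ (by omega)] at h3
        omega
    have i1 := h1 x
    have i2 := g1 y
    rw [cnt_snoc, cnt_snoc] at ha hb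
    rw [cnt_snoc, cnt_snoc] at h2 g2
    simp only [cnt_snoc] at i1 i2
    rcases h2 with ⟨rfl, h2⟩ | ⟨rfl, h2⟩
    · rcases g2 with ⟨rfl, g2⟩ | ⟨rfl, g2⟩
      · refine ⟨a, b, hab, ?_, ?_⟩ <;> split_ifs at ha hb <;> omega
      · simp at h2 g2 i1 i2
        by_cases hby : b = y + 1
        · subst hby
          by_cases hay : a = y
          · subst hay
            simp at ha hb
            exact ⟨a, a + 1, hab, by omega, by omega⟩
          · refine ⟨a, y, by omega, ?_, ?_⟩ <;> split_ifs at ha hb <;> omega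
        · refine ⟨a, b, hab, ?_, ?_⟩ <;> split_ifs at ha hb <;> omega
    · rcases g2 with ⟨rfl, g2⟩ | ⟨rfl, g2⟩
      · simp at h2 g2 i1 i2
        by_cases hax : a = x + 1
        · subst hax
          refine ⟨x, b, by omega, ?_, ?_⟩ <;> split_ifs at ha hb <;> omega
        · refine ⟨a, b, hab, ?_, ?_⟩ <;> split_ifs at ha hb <;> omega
      · simp at h2 g2 i1 i2
        refine ⟨if a = x + 1 then x else a, if b = x + 2 then x + 1 else b, ?_, ?_, ?_⟩
        · split_ifs <;> omega
        · by_cases hax : a = x + 1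
          · subst hax
            rw [if_pos rfl]
            split_ifs at ha hb <;> omega
          · rw [if_neg hax]
            split_ifs at ha hb <;> omega
        · by_cases hbx : b = x + 2
          · subst hbx
            rw [if_pos rfl]
            split_ifs at ha hb <;> omega
          · rw [if_neg hbx]
            split_ifs at ha hb <;> omega

/-! ### Sufficiency -/

theorem sum_tail (ν : ℕ → ℕ) (n k K : ℕ) (hz : ∀ i, n < i → ν i = 0) (hk : n < k) (hK : k ≤ K) :
    ∑ i ∈ Finset.range K, ν i = ∑ i ∈ Finset.range k, ν i := by
  induction K, hK using Nat.le_induction with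
  | base => rfl
  | succ K hK ih => rw [Finset.sum_range_succ, ih, hz K (by omega), add_zero]

theorem drop_sum_eq (a : List ℕ) (i : ℕ) :
    (a.drop i).sum = a.getD i 0 + (a.drop (i + 1)).sum := by
  by_cases h : i < a.length
  · rw [List.drop_eq_getElem_cons h, List.sum_cons]
    simp [List.getD_eq_getElem?_getD, h]
  · rw [List.drop_eq_nil_of_le (by omega), List.drop_eq_nil_of_le (by omega),
      List.getD_eq_default _ _ (by omega)]
    simp

theorem take_sum_eq (a : List ℕ) (k : ℕ) :
    (a.take k).sum = ∑ i ∈ Finset.range k, a.getD i 0 := by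
  induction k with
  | zero => simp
  | succ k ih =>
    rw [Finset.sum_range_succ, ← ih]
    have h1 := List.sum_take_add_sum_drop a k
    have h2 := List.sum_take_add_sum_drop a (k + 1)
    have h3 := drop_sum_eq a k
    omega

theorem getD_antitone (a : List ℕ) (h : a.Pairwise (· ≥ ·)) : Antitone (fun i => a.getD i 0) := by
  intro i j hij
  show a.getD j 0 ≤ a.getD i 0
  by_cases hj : j < a.length
  · rcases Nat.lt_or_ge i j with h1 | h1
    · have := List.pairwise_iff_getElem.1 h i j (by omega) hj h1
      simpa [List.getD_eq_getElem?_getD, hj, show i < a.length by omega] using this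
    · have : i = j := by omega
      rw [this]
  · rw [List.getD_eq_default a 0 (by omega : a.length ≤ j)]
    exact Nat.zero_le _

theorem getD_ge (a : List ℕ) (m : ℕ) (h : ∀ x ∈ a, m ≤ x) (i : ℕ) (hi : i < a.length) :
    m ≤ a.getD i 0 := by
  apply h
  simp [List.getD_eq_getElem?_getD, hi]

theorem offset_sum (a : List ℕ) (i : ℕ) :
    rowOffset a i + (a.drop i).sum = a.sum := List.sum_take_add_sum_drop a i

theorem offset_succ (a : List ℕ) (i : ℕ) :
    rowOffset a (i + 1) = rowOffset a i + a.getD i 0 := by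
  have h1 := offset_sum a i
  have h2 := offset_sum a (i + 1)
  have h3 := drop_sum_eq a i
  omega

theorem offset_cons (x : ℕ) (a : List ℕ) (i : ℕ) :
    rowOffset (x :: a) (i + 1) = x + rowOffset a i := by
  simp [rowOffset]

theorem ribbon_cons (a1 : ℕ) (a' : List ℕ) (ov : ℕ → Bool) (u w : List ℕ)
    (hpos : ∀ x ∈ a1 :: a', 1 ≤ x)
    (hl : Lift a1 u w) (hu : IsRibbonWord a' (fun i => ov (i + 1)) u)
    (hgap : a' ≠ [] → ov 0 = true → 0 < w.getD a1 0) :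
    IsRibbonWord (a1 :: a') ov w := by
  obtain ⟨h1, h2, h3⟩ := hu
  have ha1 : 1 ≤ a1 := hpos a1 (by simp)
  have hpos' : ∀ i, i < a'.length → 1 ≤ a'.getD i 0 :=
    getD_ge a' 1 (fun x hx => hpos x (by simp [hx]))
  refine ⟨?_, ?_, ?_⟩
  · rw [lift_length hl, h1]; simp
  · intro i j hi hj
    cases i with
    | zero =>
      have hj' : j + 1 < a1 := hj
      have e : rowOffset (a1 :: a') 0 = 0 := by simp [rowOffset]
      rw [e, lift_zeros hl _ (by omega)]
      exact Nat.zero_le _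
    | succ i =>
      have hj' : j + 1 < a'.getD i 0 := hj
      have hi' : i < a'.length := by simpa using hi
      have e1 := offset_sum a' i
      have e2 := drop_sum_eq a' i
      have := (lift_desc hl (rowOffset a' i + j) (by omega)).1 (h2 i j hi' hj')
      rw [offset_cons]
      rw [show a1 + rowOffset a' i + j + 1 = a1 + (rowOffset a' i + j + 1) by omega,
        show a1 + rowOffset a' i + j = a1 + (rowOffset a' i + j) by omega]
      exact this
  · intro i hi hov
    rw [offset_cons]
    cases i with
    | zero =>
      have e : rowOffset a' 0 = 0 := by simp [rowOffset]
      rw [e, add_zero, lift_zeros hl _ (by omega)]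
      refine hgap ?_ hov
      rintro rfl
      simp at hi
    | succ i =>
      have hi' : i + 1 < a'.length := by simpa using hi
      have e1 := offset_sum a' (i + 1)
      have e2 := drop_sum_eq a' (i + 1)
      have e3 := hpos' (i + 1) hi'
      have e4 := offset_succ a' i
      have e5 := hpos' i (by omega)
      have e6 : rowOffset a' (i + 1) - 1 + 1 = rowOffset a' (i + 1) := by omega
      have := (lift_desc hl (rowOffset a' (i + 1) - 1) (by omega)).2 (by
        rw [e6]; exact h3 i hi' hov)
      rw [e6] at this
      rw [show a1 + rowOffset a' (i + 1) - 1 = a1 + (rowOffset a' (i + 1) - 1) by omega]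
      exact this

theorem lift_grows {m : ℕ} {v u : List ℕ} (h : Lift m v u) (hm : 0 < m) :
    ∃ a, v.count a < u.count a := by
  by_contra hcon
  push Not at hcon
  have hp : List.Perm v u := by
    rw [List.perm_iff_count]
    intro j
    have := (lift_inter h j).2
    have := hcon j
    omega
  have h1 := hp.length_eq
  have h2 := lift_length h
  omega

theorem suff_main (a : List ℕ) : ∀ (q ν : ℕ → ℕ),
    a.Pairwise (· ≥ ·) → (∀ x ∈ a, 2 ≤ x) →
    (∀ i, q i = q (i + 1) ∨ q i = q (i + 1) + 1) → (∀ i, a.length ≤ i + 1 → q i = 0) →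
    Antitone ν →
    (∀ k, ∑ i ∈ Finset.range k, a.getD i 0 ≤ ∑ i ∈ Finset.range k, ν i) →
    (∀ k, a.length ≤ k → ∑ i ∈ Finset.range k, ν i = a.sum) →
    (∀ i, ν i + q i ≤ (a.drop i).sum) →
    ∃ w : List ℕ, (∀ j, w.count j = ν j) ∧
      (∀ k j, (w.take k).count (j + 1) ≤ (w.take k).count j) ∧
      IsRibbonWord a (fun i => decide (q i = q (i + 1) + 1)) w ∧
      (a ≠ [] → ∃ u, Lift (a.getD 0 0) u w ∧
        ∀ n, 0 < ν n → ν (n + 1) = 0 → ν n < ν 0 → ∃ j < n, u.count j < ν j) := by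
  induction a with
  | nil =>
    intro q ν _ _ _ _ _ _ _ hb
    refine ⟨[], ?_, by simp, ⟨by simp, by simp, by simp⟩, by simp⟩
    intro j
    have := hb j
    simp at this
    simp [this]
  | cons a1 a' ih =>
    intro q ν hpw h2 hq hq0 hν hdom htot hb
    have ha1 : 2 ≤ a1 := h2 a1 (by simp)
    have hν0 : a1 ≤ ν 0 := by
      have := hdom 1
      simpa using this
    have hνl : ∀ i, a'.length + 1 ≤ i → ν i = 0 := by
      intro i hi
      have := hb i
      rw [List.drop_eq_nil_of_le (by simpa using hi)] at this
      simp at this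
      omega
    obtain ⟨n, hn, hn'⟩ : ∃ n, 0 < ν n ∧ ν (n + 1) = 0 := by
      classical
      have hex : ∃ n, ν (n + 1) = 0 := ⟨a'.length, hνl _ le_rfl⟩
      refine ⟨Nat.find hex, ?_, Nat.find_spec hex⟩
      rcases Nat.eq_zero_or_pos (Nat.find hex) with h | h
      · rw [h]; omega
      · have := Nat.find_min hex (show Nat.find hex - 1 < Nat.find hex by omega)
        rw [show Nat.find hex - 1 + 1 = Nat.find hex by omega] at this
        omega
    have hνz : ∀ i, n < i → ν i = 0 := fun i h => by
      have := hν (show n + 1 ≤ i by omega); omega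
    have htot' : ∀ k, n < k → ∑ i ∈ Finset.range k, ν i = (a1 :: a').sum := by
      intro k hk
      rw [← sum_tail ν n k (max k (a'.length + 1)) hνz hk (by omega)]
      exact htot _ (by simp)
    obtain ⟨κ, k1, k2, k3, k4, k5, k6⟩ := step_shape (a'.length + 1)
      (fun i => (a1 :: a').getD i 0) q (fun i => ((a1 :: a').drop i).sum) ν n
      (getD_antitone _ hpw)
      (fun i hi => getD_ge _ 2 h2 i (by simpa using hi))
      (fun i => drop_sum_eq _ i)
      (fun i hi => by
        show ((a1 :: a').drop i).sum = 0
        rw [List.drop_eq_nil_of_le (by simpa using hi)]; rfl)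
      hq (fun i hi => hq0 i (by simpa using hi)) hν hdom htot' hb hn hn'
    have hκ : Antitone κ := antitone_nat_of_succ_le (fun i =>
      le_trans (k1 (i + 1)).2 (k1 i).1)
    obtain ⟨u, u1, u2, u3, u4⟩ := ih (fun i => q (i + 1)) κ (List.pairwise_cons.1 hpw).2
      (fun x hx => h2 x (by simp [hx])) (fun i => hq (i + 1))
      (fun i hi => hq0 (i + 1) (by simp; omega)) hκ k3
      (fun k hk => k4 k (by omega)) k2
    have hul : u.length = a'.sum := u3.1
    obtain ⟨w, hw, hwc⟩ := lift_exists a1 (a'.length + 1) u u2 ν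
      (fun j => by rw [u1 j]; exact k1 j) hνl
      (by rw [htot _ (by simp), hul, List.sum_cons]; omega)
    refine ⟨w, hwc, lift_yam hw, ?_, fun _ => ⟨u, hw, ?_⟩⟩
    · refine ribbon_cons a1 a' _ u w (fun x hx => by have := h2 x hx; omega) hw u3 ?_
      intro hne hov
      have hov' : q 0 = q 1 + 1 := by simpa using hov
      have hκn := k5 hov'
      obtain ⟨v, v1, v2⟩ := u4 hne
      have hl' : 0 < a'.length := List.length_pos_iff.2 hne
      have ha2 : 2 ≤ a'.getD 0 0 := getD_ge a' 2 (fun x hx => h2 x (by simp [hx])) 0 hl'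
      obtain ⟨r, hrn, hr⟩ : ∃ r < n, v.count r < u.count r := by
        by_cases hκ0 : κ n = 0
        · obtain ⟨r, hr⟩ := lift_grows v1 (by omega)
          refine ⟨r, ?_, hr⟩
          by_contra hrn
          have := hκ (show n ≤ r by omega)
          rw [u1 r] at hr
          omega
        · have hn0 : n ≠ 0 := by
            rintro rfl
            have e1 := htot' 1 (by omega)
            have e2 := hb 0
            simp only [Finset.sum_range_one, List.drop_zero] at e1 e2
            omega
          have e1 := (k1 (n - 1)).1
          rw [show n - 1 + 1 = n by omega] at e1
          have e2 := hκ (Nat.zero_le (n - 1))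
          have e3 := (k1 (n + 1)).2
          obtain ⟨r, hr1, hr2⟩ := v2 n (by omega) (by omega) (by omega)
          exact ⟨r, hr1, by rw [u1 r]; exact hr2⟩
      exact lift_triple v1 w hw r n hrn hr (by rw [u1, hwc]; exact hκn)
    · intro n' g1 g2 g3
      have hnn : n' = n := by
        rcases Nat.lt_trichotomy n' n with h | h | h
        · have := hν (show n' + 1 ≤ n by omega); omega
        · exact h
        · have := hνz n' h; omega
      subst hnn
      obtain ⟨j, hj1, hj2⟩ := k6 g3
      exact ⟨j, hj1, by rw [u1 j]; exact hj2⟩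

theorem getD_map_succ (w : List ℕ) (k : ℕ) :
    (w.map Nat.succ).getD k 0 = if k < w.length then w.getD k 0 + 1 else 0 := by
  split_ifs with h
  · simp [List.getD_eq_getElem?_getD, h]
  · rw [List.getD_eq_default _ _ (by simp; omega)]

theorem ribbon_map_succ (a : List ℕ) (ov : ℕ → Bool) (w : List ℕ) (h : IsRibbonWord a ov w) :
    IsRibbonWord a ov (w.map Nat.succ) := by
  obtain ⟨h1, h2, h3⟩ := h
  refine ⟨by simpa using h1, ?_, ?_⟩
  · intro i j hi hj
    have := h2 i j hi hj
    rw [getD_map_succ, getD_map_succ]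
    split_ifs <;> omega
  · intro i hi hov
    have := h3 i hi hov
    rw [getD_map_succ, getD_map_succ]
    have hlt : rowOffset a (i + 1) < w.length := by
      by_contra hge
      rw [List.getD_eq_default w 0 (by omega : w.length ≤ rowOffset a (i + 1))] at this
      omega
    rw [if_pos (by omega), if_pos hlt]
    omega

theorem count_map_succ (w : List ℕ) (j : ℕ) : (w.map Nat.succ).count (j + 1) = w.count j :=
  List.count_map_of_injective w Nat.succ Nat.succ_injective j

theorem overlap_step (a p : List ℕ) (hp : IsOverlapSeq a p) :
    (∀ i, p.getD i 0 = p.getD (i + 1) 0 ∨ p.getD i 0 = p.getD (i + 1) 0 + 1) ∧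
    (∀ i, a.length ≤ i + 1 → p.getD i 0 = 0) := by
  obtain ⟨h1, h2, h3⟩ := hp
  have hz : ∀ i, a.length ≤ i + 1 → p.getD i 0 = 0 := by
    intro i hi
    by_cases h : i = a.length - 1
    · rw [h]; exact h2
    · exact List.getD_eq_default _ _ (by omega)
  refine ⟨fun i => ?_, hz⟩
  by_cases h : i + 1 < a.length
  · exact h3 i h
  · left; rw [hz i (by omega), hz (i + 1) (by omega)]

theorem lt_lenp (p : List ℕ) (i : ℕ) (hi : i < p.length) (h : ∀ j ≤ i, p.getD j 0 ≠ 0) :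
    i < lenp p := by
  have h1 : (p.take (i + 1)).countP (fun x => decide (x ≠ 0)) = (p.take (i + 1)).length := by
    rw [List.countP_eq_length]
    intro x hx
    obtain ⟨k, hk, rfl⟩ := List.getElem_of_mem hx
    have hk' : k < i + 1 ∧ k < p.length := by simpa using hk
    have := h k (by omega)
    simpa [List.getD_eq_getElem?_getD, hk'.2] using this
  have h2 := (List.take_sublist (i + 1) p).countP_le (p := fun x => decide (x ≠ 0))
  rw [h1, List.length_take] at h2
  unfold lenp
  omega

theorem sufficiency (a p nu : List ℕ) (ha : IsPartition a) (h2 : PartsGE a 2)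
    (hp : IsOverlapSeq a p) (hnu : IsPartition nu) (hsum : nu.sum = a.sum)
    (hint : InInterval a p nu)
    (hb : ∀ i, i < lenp p → nu.getD i 0 + p.getD i 0 ≤ (a.drop i).sum) :
    InSupport a p nu := by
  obtain ⟨⟨_, hd1⟩, hs2, hd2⟩ := hint
  obtain ⟨hq, hq0⟩ := overlap_step a p hp
  have htake : ∀ k, (nu.take k).sum ≤ nu.sum := by
    intro k
    have := List.sum_take_add_sum_drop nu k
    omega
  have hanti : Antitone (fun i => p.getD i 0) := antitone_nat_of_succ_le (fun i => by
    have := hq i; omega)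
  obtain ⟨w, w1, w2, w3, _⟩ := suff_main a (fun i => p.getD i 0) (fun i => nu.getD i 0)
    ha.1 h2 hq hq0 (getD_antitone nu hnu.1)
    (by intro k; rw [← take_sum_eq, ← take_sum_eq]; exact hd1 k)
    (by
      intro k hk
      rw [← take_sum_eq]
      have e1 := hd1 k
      rw [List.take_of_length_le hk] at e1
      have e2 := htake k
      omega)
    (by
      intro i
      show nu.getD i 0 + p.getD i 0 ≤ (a.drop i).sum
      by_cases hpi : p.getD i 0 = 0
      · have e1 := hd1 i
        have e2 := htake (i + 1)
        have e3 := take_sum_eq nu (i + 1)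
        rw [Finset.sum_range_succ, ← take_sum_eq] at e3
        have e4 := List.sum_take_add_sum_drop a i
        omega
      · apply hb
        apply lt_lenp
        · by_contra hge
          exact hpi (List.getD_eq_default _ _ (by omega))
        · intro j hj
          have : p.getD i 0 ≤ p.getD j 0 := hanti hj
          omega)
  refine ⟨w.map Nat.succ, ribbon_map_succ a _ w w3, ?_, ?_, ?_⟩
  · intro k j
    rw [← List.map_take, count_map_succ, count_map_succ]
    exact w2 k j
  · intro j
    rw [count_map_succ]
    exact w1 j
  · rw [List.count_eq_zero]
    simp

/-! ### Necessity -/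

theorem getD_drop' (w : List ℕ) (n k : ℕ) : (w.drop n).getD k 0 = w.getD (n + k) 0 := by
  simp [List.getD_eq_getElem?_getD]

theorem mem_take_getD (w : List ℕ) (n x : ℕ) (h : x ∈ w.take n) :
    ∃ i < n, i < w.length ∧ w.getD i 0 = x := by
  obtain ⟨k, hk, rfl⟩ := List.getElem_of_mem h
  have hk' : k < n ∧ k < w.length := by simpa using hk
  exact ⟨k, hk'.1, hk'.2, by simp [List.getD_eq_getElem?_getD, hk'.2]⟩

theorem getD_mem_take (w : List ℕ) (n i : ℕ) (h : i < n) (h' : i < w.length) :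
    w.getD i 0 ∈ w.take n := by
  rw [List.mem_iff_getElem]
  exact ⟨i, by simp; omega, by simp [List.getD_eq_getElem?_getD, h']⟩

theorem nec_letters (a : List ℕ) (ov : ℕ → Bool) (w : List ℕ) (hpos : ∀ x ∈ a, 1 ≤ x)
    (hr : IsRibbonWord a ov w) (hy : IsYam w) :
    ∀ k, k ≤ a.length → ∀ i, i < rowOffset a k → w.getD i 0 ≤ k := by
  obtain ⟨h1, h2, h3⟩ := hr
  intro k
  induction k with
  | zero => intro _ i hi; simp [rowOffset] at hi
  | succ k ih =>
    intro hk i hi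
    have ih' := ih (by omega)
    have e1 := offset_succ a k
    have e2 := getD_ge a 1 hpos k (by omega)
    have e3 := offset_sum a (k + 1)
    have hfirst : w.getD (rowOffset a k) 0 ≤ k + 1 := by
      by_contra hgt
      obtain ⟨j, hj⟩ : ∃ j, w.getD (rowOffset a k) 0 = j + 2 :=
        ⟨w.getD (rowOffset a k) 0 - 2, by omega⟩
      have hm := getD_mem_take w (rowOffset a k + 1) (rowOffset a k) (by omega) (by omega)
      rw [hj] at hm
      have hc := List.count_pos_iff.2 hm
      have hy' := hy (rowOffset a k + 1) j
      obtain ⟨i', hi1, hi2, hi3⟩ := mem_take_getD w _ (j + 1)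
        (List.count_pos_iff.1 (lt_of_lt_of_le hc hy'))
      by_cases hii : i' = rowOffset a k
      · rw [hii] at hi3; omega
      · have := ih' i' (by omega)
        omega
    by_cases hlt : i < rowOffset a k
    · have := ih' i hlt
      omega
    · have hrow : ∀ j, j < a.getD k 0 → w.getD (rowOffset a k + j) 0 ≤ k + 1 := by
        intro j
        induction j with
        | zero => intro _; exact hfirst
        | succ j ihj =>
          intro hj
          exact le_trans (h2 k j (by omega) hj) (ihj (by omega))
      have := hrow (i - rowOffset a k) (by omega)
      rwa [show rowOffset a k + (i - rowOffset a k) = i by omega] at this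

theorem length_le_counts (k : ℕ) (l : List ℕ) (h : ∀ x ∈ l, 1 ≤ x ∧ x ≤ k) :
    l.length ≤ ∑ j ∈ Finset.range k, l.count (j + 1) := by
  induction l with
  | nil => simp
  | cons x l ih =>
    have h1 := ih (fun y hy => h y (by simp [hy]))
    have h2 := h x (by simp)
    simp only [List.count_cons, Finset.sum_add_distrib, List.length_cons]
    have h3 : 1 ≤ ∑ j ∈ Finset.range k, (if (x == j + 1) = true then 1 else 0) := by
      have := Finset.single_le_sum (f := fun j => if (x == j + 1) = true then 1 else 0)
        (fun _ _ => Nat.zero_le _) (Finset.mem_range.2 (show x - 1 < k by omega))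
      have e : x = x - 1 + 1 := by omega
      simp only [← e, beq_self_eq_true, if_true] at this
      exact this
    omega

theorem ribbon_drop_one (a1 : ℕ) (a' : List ℕ) (ov : ℕ → Bool) (w : List ℕ)
    (hpos : ∀ x ∈ a1 :: a', 1 ≤ x) (h : IsRibbonWord (a1 :: a') ov w) :
    IsRibbonWord a' (fun i => ov (i + 1)) (w.drop a1) := by
  obtain ⟨h1, h2, h3⟩ := h
  have hpos' : ∀ i, i < a'.length → 1 ≤ a'.getD i 0 :=
    getD_ge a' 1 (fun x hx => hpos x (by simp [hx]))
  refine ⟨by simp [h1], ?_, ?_⟩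
  · intro i j hi hj
    have := h2 (i + 1) j (by simpa using hi) hj
    rw [offset_cons] at this
    rw [getD_drop', getD_drop']
    simpa only [add_assoc] using this
  · intro i hi hov
    have := h3 (i + 1) (by simpa using hi) hov
    rw [offset_cons] at this
    rw [getD_drop', getD_drop']
    have e4 := offset_succ a' i
    have e5 := hpos' i (by omega)
    rwa [show a1 + rowOffset a' (i + 1) - 1 = a1 + (rowOffset a' (i + 1) - 1) by omega] at this

theorem ribbon_drop (i : ℕ) : ∀ (a : List ℕ) (ov : ℕ → Bool) (w : List ℕ),
    (∀ x ∈ a, 1 ≤ x) → IsRibbonWord a ov w →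
    IsRibbonWord (a.drop i) (fun j => ov (i + j)) (w.drop (rowOffset a i)) := by
  induction i with
  | zero => intro a ov w _ h; simpa [rowOffset] using h
  | succ i ih =>
    intro a ov w hpos h
    cases a with
    | nil =>
      have h1 := h.1
      refine ⟨by simpa [rowOffset] using h1, by simp, by simp⟩
    | cons a1 a' =>
      have := ih a' _ _ (fun x hx => hpos x (by simp [hx])) (ribbon_drop_one a1 a' ov w hpos h)
      rw [List.drop_drop] at this
      rw [offset_cons, List.drop_succ_cons]
      have e : (fun j => ov (i + 1 + j)) = fun j => ov (i + j + 1) := by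
        funext j; congr 1; omega
      rw [e]
      exact this

theorem count_one (x : ℕ) (l : List ℕ) : ∀ i, i < l.length → l.getD i 0 ≠ x →
    l.count x + 1 ≤ l.length := by
  induction l with
  | nil => intro i hi; simp at hi
  | cons h t ih =>
    intro i hi hne
    rw [List.count_cons, List.length_cons]
    cases i with
    | zero =>
      have hne' : h ≠ x := by simpa using hne
      have := List.count_le_length (l := t) (a := x)
      simp [hne', this]
    | succ i =>
      have := ih i (by simpa using hi) (by simpa using hne)
      split_ifs <;> omega

theorem count_two (x : ℕ) (l : List ℕ) : ∀ i j, i < j → j < l.length → l.getD i 0 ≠ x →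
    l.getD j 0 ≠ x → l.count x + 2 ≤ l.length := by
  induction l with
  | nil => intro i j _ hj; simp at hj
  | cons h t ih =>
    intro i j hij hj hi' hj'
    rw [List.count_cons, List.length_cons]
    obtain ⟨j, rfl⟩ : ∃ j0, j = j0 + 1 := ⟨j - 1, by omega⟩
    cases i with
    | zero =>
      have hne' : h ≠ x := by simpa using hi'
      have := count_one x t j (by simpa using hj) (by simpa using hj')
      simp [hne', this]
    | succ i =>
      have := ih i j (by omega) (by simpa using hj) (by simpa using hi') (by simpa using hj')
      split_ifs <;> omega

theorem nec_count (x : ℕ) (a : List ℕ) : ∀ (q : ℕ → ℕ) (w : List ℕ), (∀ y ∈ a, 2 ≤ y) →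
    (∀ i, q i = q (i + 1) ∨ q i = q (i + 1) + 1) → (∀ i, a.length ≤ i + 1 → q i = 0) →
    IsRibbonWord a (fun i => decide (q i = q (i + 1) + 1)) w →
    w.count x + q 0 ≤ a.sum ∧ (a ≠ [] → x < w.getD 0 0 → w.count x + q 0 + 1 ≤ a.sum) := by
  induction a with
  | nil =>
    intro q w _ _ hq0 h
    have h1 : w = [] := List.length_eq_zero_iff.1 (by simpa using h.1)
    subst h1
    simp [hq0 0 (by simp)]
  | cons a1 a' ih =>
    intro q w h2 hq hq0 h
    have ha1 : 2 ≤ a1 := h2 a1 (by simp)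
    have hlen : w.length = a1 + a'.sum := by simpa using h.1
    have hpos : ∀ y ∈ a1 :: a', 1 ≤ y := fun y hy => by have := h2 y hy; omega
    have hd := ribbon_drop_one a1 a' _ w hpos h
    obtain ⟨i1, i2⟩ := ih (fun i => q (i + 1)) (w.drop a1) (fun y hy => h2 y (by simp [hy]))
      (fun i => hq (i + 1)) (fun i hi => hq0 (i + 1) (by simp; omega)) hd
    simp only [Nat.zero_add] at i1 i2
    have hc : w.count x = (w.take a1).count x + (w.drop a1).count x := by
      rw [← List.count_append, List.take_append_drop]
    have hl : (w.take a1).length = a1 := by simp [hlen]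
    have hg : ∀ i, i < a1 → (w.take a1).getD i 0 = w.getD i 0 := by
      intro i hi
      simp [List.getD_eq_getElem?_getD, List.getElem?_take, hi]
    have c0 : (w.take a1).count x ≤ a1 := by
      have := List.count_le_length (l := w.take a1) (a := x); omega
    have c1 : ∀ i, i < a1 → w.getD i 0 ≠ x → (w.take a1).count x + 1 ≤ a1 := by
      intro i hi hne
      have := count_one x (w.take a1) i (by omega) (by rw [hg i hi]; exact hne)
      omega
    have c2 : w.getD 0 0 ≠ x → w.getD (a1 - 1) 0 ≠ x → (w.take a1).count x + 2 ≤ a1 := by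
      intro hne hne'
      have := count_two x (w.take a1) 0 (a1 - 1) (by omega) (by omega)
        (by rw [hg 0 (by omega)]; exact hne) (by rw [hg _ (by omega)]; exact hne')
      omega
    rw [List.sum_cons, hc]
    have hq' : q 0 = q 1 ∨ q 0 = q 1 + 1 := hq 0
    by_cases hov : q 0 = q 1 + 1
    · have hne : a' ≠ [] := by
        rintro rfl
        have := hq0 0 (by simp)
        omega
      have hgap := h.2.2 0 (by
        have := List.length_pos_iff.2 hne
        simpa using this) (by simpa using hov)
      have e : rowOffset (a1 :: a') (0 + 1) = a1 := by simp [rowOffset]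
      rw [e] at hgap
      have i2' := i2 hne
      rw [getD_drop', add_zero] at i2'
      by_cases hyx : w.getD (a1 - 1) 0 = x
      · have i3 := i2' (by omega)
        refine ⟨by omega, fun _ hx => ?_⟩
        have := c1 0 (by omega) (by omega)
        omega
      · have d1 := c1 (a1 - 1) (by omega) hyx
        refine ⟨by omega, fun _ hx => ?_⟩
        have := c2 (by omega) hyx
        omega
    · refine ⟨by omega, fun _ hx => ?_⟩
      have := c1 0 (by omega) (by omega)
      omega

theorem necessity (a p nu : List ℕ) (h2 : PartsGE a 2)
    (hp : IsOverlapSeq a p) (hsum : nu.sum = a.sum) (h : InSupport a p nu) :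
    InInterval a p nu ∧ ∀ i, i < lenp p → nu.getD i 0 + p.getD i 0 ≤ (a.drop i).sum := by
  obtain ⟨w, hr, hy, hc, hc0⟩ := h
  obtain ⟨hq, hq0⟩ := overlap_step a p hp
  have hpos : ∀ x ∈ a, 1 ≤ x := fun x hx => by have := h2 x hx; omega
  have hlet := nec_letters a _ w hpos hr hy
  have hw1 : ∀ x ∈ w, 1 ≤ x := by
    intro x hx
    rcases Nat.eq_zero_or_pos x with h0 | h0
    · subst h0
      exact absurd hx (List.count_eq_zero.1 hc0)
    · exact h0
  have hbound : ∀ i, i ≤ a.length → nu.getD i 0 + p.getD i 0 ≤ (a.drop i).sum := by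
    intro i hi
    have hd := ribbon_drop i a _ w hpos hr
    have h1 := (nec_count (i + 1) (a.drop i) (fun j => p.getD (i + j) 0) (w.drop (rowOffset a i))
      (fun y hy => h2 y (List.mem_of_mem_drop hy)) (fun j => hq (i + j))
      (fun j hj => hq0 (i + j) (by simp at hj; omega)) hd).1
    have h3 : w.count (i + 1) = (w.take (rowOffset a i)).count (i + 1)
        + (w.drop (rowOffset a i)).count (i + 1) := by
      rw [← List.count_append, List.take_append_drop]
    have h4 : (w.take (rowOffset a i)).count (i + 1) = 0 := by
      rw [List.count_eq_zero]
      intro hm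
      obtain ⟨k, hk1, _, hk3⟩ := mem_take_getD w _ _ hm
      have := hlet i hi k hk1
      omega
    have h5 := hc i
    simp only [add_zero] at h1
    omega
  have hdom : ∀ k, k ≤ a.length → (a.take k).sum ≤ (nu.take k).sum := by
    intro k hk
    have h1 : (w.take (rowOffset a k)).length = (a.take k).sum := by
      have e1 := offset_sum a k
      have e2 := hr.1
      have e3 : rowOffset a k = (a.take k).sum := rfl
      rw [List.length_take]
      omega
    rw [← h1, take_sum_eq nu]
    refine le_trans (length_le_counts k _ ?_) (Finset.sum_le_sum ?_)
    · intro x hx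
      refine ⟨hw1 x (List.mem_of_mem_take hx), ?_⟩
      obtain ⟨i, hi1, _, hi3⟩ := mem_take_getD w _ _ hx
      have := hlet k hk i hi1
      omega
    · intro j _
      rw [← hc j]
      exact (List.take_sublist _ w).count_le _
  have hb0 := hbound 0 (Nat.zero_le _)
  rw [List.drop_zero] at hb0
  refine ⟨⟨⟨hsum.symm, ?_⟩, ?_, ?_⟩, ?_⟩
  · intro k
    by_cases hk : k ≤ a.length
    · exact hdom k hk
    · have h1 := hdom a.length le_rfl
      rw [List.take_length] at h1
      rw [List.take_of_length_le (by omega)]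
      have h3 := sum_mono (fun i => nu.getD i 0) (show a.length ≤ k by omega)
      rw [← take_sum_eq, ← take_sum_eq] at h3
      omega
  · simp only [List.sum_cons, List.sum_nil]
    omega
  · intro i
    match i with
    | 0 => simp
    | 1 =>
      rw [take_sum_eq]
      simp only [Finset.sum_range_one, List.take_succ_cons, List.take_zero, List.sum_cons,
        List.sum_nil]
      omega
    | i + 2 =>
      have := List.sum_take_add_sum_drop nu (i + 2)
      simp only [List.take_succ_cons, List.take_nil, List.sum_cons, List.sum_nil]
      omega
  · intro i hi
    apply hbound
    have h1 : lenp p ≤ p.length := List.countP_le_length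
    have h3 := hp.1
    omega

/-- Theorem `ThmNec`: for a partition `a` with parts ≥ 2, overlapping
partition `p`, and a partition `nu` of `|a|`, the LR coefficient `c_{R_a^p}^{nu}` is positive
iff `nu ∈ [a, (|a|-p₁, p₁)]` and `ν_i ≤ Σ_{q=i}^{ℓ(a)} a_q − p_i` for all `1 ≤ i ≤ ℓ(p)`. -/
theorem positivity_of_monotone_ribbon_LR_coefficient
    (a p nu : List ℕ) (ha : IsPartition a) (h2 : PartsGE a 2)
    (hp : IsOverlapSeq a p) (hnu : IsPartition nu) (hsum : nu.sum = a.sum) :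
    InSupport a p nu ↔
      (InInterval a p nu ∧
        ∀ i, i < lenp p → nu.getD i 0 + p.getD i 0 ≤ (a.drop i).sum) := by
  constructor
  · exact necessity a p nu h2 hp hsum
  · rintro ⟨h1, h3⟩
    exact sufficiency a p nu ha h2 hp hnu hsum h1 h3

end RibbonSupport
end

section
/- Let α be a partition with all parts at least 2, put ℓ := ℓ(α), and let ν be a partition of |α|. There exists a standard Young tableau of shape ν whose descent set equals S(α) = {α_1, α_1+α_2, …, α_1+⋯+α_{ℓ−1}} if and only if ν lies in the dominance-order interval [α, (|α|−ℓ+1, ℓ−1)] and ν_i ≤ Σ_{q=i}^{ℓ} α_q − (ℓ−i) for every 1 ≤ i ≤ ℓ−1. -/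
namespace RibbonSupport

open Finset in
lemma greedy (lo U : ℕ → ℕ) (h : ∀ j, lo j ≤ U j) (K : ℕ) : ∀ M : ℕ,
    ∑ j ∈ range (K+1), lo j ≤ M → M ≤ ∑ j ∈ range (K+1), U j →
    ∃ t ≤ K, ∃ v : ℕ → ℕ, (∀ j < t, v j = U j) ∧ (∀ j > t, v j = lo j) ∧ lo t ≤ v t ∧ v t ≤ U t ∧
      ∑ j ∈ range (K+1), v j = M := by
  induction K with
  | zero =>
    intro M h1 h2
    simp at h1 h2
    refine ⟨0, le_rfl, fun j => if j = 0 then M else lo j, by simp, ?_, by simpa, by simpa, by simp⟩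
    intro j hj
    simp; omega
  | succ K ih =>
    intro M h1 h2
    by_cases hc : ∑ j ∈ range (K+1), U j + lo (K+1) ≤ M
    · refine ⟨K+1, le_rfl, fun j => if j < K+1 then U j else if j = K+1 then
        M - ∑ j ∈ range (K+1), U j else lo j, ?_, ?_, ?_, ?_, ?_⟩
      · intro j hj; simp [hj]
      · intro j hj
        have h1 : ¬ j < K+1 := by omega
        have h2 : ¬ j = K+1 := by omega
        simp [h1, h2]
      · simp; omega
      · rw [sum_range_succ] at h2
        simp; omega
      · rw [sum_range_succ]
        have : ∑ x ∈ range (K + 1), (if x < K+1 then U x else if x = K+1 then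
            M - ∑ j ∈ range (K+1), U j else lo x) = ∑ x ∈ range (K+1), U x := by
          apply sum_congr rfl
          intro x hx
          simp at hx; simp; omega
        rw [this]; simp; omega
    · rw [sum_range_succ] at h1
      obtain ⟨t, ht, v, a1, a2, a3, a4, a5⟩ := ih (M - lo (K+1)) (by omega) (by omega)
      refine ⟨t, by omega, v, a1, a2, a3, a4, ?_⟩
      rw [sum_range_succ, a5, a2 (K+1) (by omega)]
      omega

/-- partial sums -/
def psum (f : ℕ → ℕ) (k : ℕ) : ℕ := ∑ j ∈ Finset.range k, f j

lemma psum_zero (f : ℕ → ℕ) : psum f 0 = 0 := by simp [psum]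

lemma psum_succ (f : ℕ → ℕ) (k : ℕ) : psum f (k+1) = psum f k + f k := by
  simp [psum, Finset.sum_range_succ]

lemma psum_mono (f : ℕ → ℕ) : Monotone (psum f) :=
  monotone_nat_of_le_succ (fun k => by rw [psum_succ]; omega)

lemma psum_const_of_zero (f : ℕ → ℕ) (k : ℕ) (h : ∀ j, k ≤ j → f j = 0) : ∀ m, k ≤ m →
    psum f m = psum f k := by
  intro m hm
  induction m, hm using Nat.le_induction with
  | base => rfl
  | succ m hm ih => rw [psum_succ, ih, h m hm]; rfl

lemma psum_congr (f g : ℕ → ℕ) (k : ℕ) (h : ∀ j < k, f j = g j) : psum f k = psum g k := by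
  unfold psum
  exact Finset.sum_congr rfl (fun x hx => h x (by simpa using hx))

lemma psum_le (f g : ℕ → ℕ) (k : ℕ) (h : ∀ j < k, f j ≤ g j) : psum f k ≤ psum g k := by
  unfold psum
  exact Finset.sum_le_sum (fun x hx => h x (by simpa using hx))

/-- a lower bound for growth of partial sums -/
lemma psum_grow (c : ℕ) (f : ℕ → ℕ) (p : ℕ) : ∀ m, p ≤ m → (∀ j, p ≤ j → j < m → c ≤ f j) →
    psum f p + c * (m - p) ≤ psum f m := by
  intro m hm
  induction m, hm using Nat.le_induction with
  | base => intro _; simp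
  | succ m hm ih =>
    intro h
    have h1 := ih (fun j hj hj' => h j hj (by omega))
    have h2 := h m hm (by omega)
    rw [psum_succ, Nat.succ_sub hm, Nat.mul_succ]
    omega

lemma psum_update_lt (f : ℕ → ℕ) (i v k : ℕ) (h : k ≤ i) :
    psum (Function.update f i v) k = psum f k :=
  psum_congr _ _ _ (fun j hj => by rw [Function.update_of_ne (by omega)])

lemma psum_update_gt (f : ℕ → ℕ) (i v k : ℕ) (h : i < k) :
    psum (Function.update f i v) k + f i = psum f k + v := by
  induction k, h using Nat.le_induction with
  | base =>
    rw [psum_succ, psum_succ, psum_update_lt _ _ _ _ le_rfl, Function.update_self]; omega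
  | succ m hm ih =>
    have : i < m := hm
    rw [psum_succ, psum_succ, Function.update_of_ne (by omega)]; omega

/-- the numerical conditions -/
structure Good (α : ℕ → ℕ) (l : ℕ) (ν : ℕ → ℕ) : Prop where
  anti : Antitone ν
  supp : ∀ j, l ≤ j → ν j = 0
  dom : ∀ k, k ≤ l → psum α k ≤ psum ν k
  tot : psum ν l = psum α l
  cc : ∀ i, i + 1 < l → ν i + (l - 1 - i) + psum α i ≤ psum α l

/-- the extra condition at the last row `r` -/
structure Extra (α : ℕ → ℕ) (l : ℕ) (ν : ℕ → ℕ) (r : ℕ) : Prop where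
  pos : 1 ≤ r
  lt : ν r < ν (r - 1)
  slack : ν r + psum α r + (l - r) ≤ psum α l

/-- greedy horizontal strip removal with upper bounds `U` -/
lemma greedy_step (α : ℕ → ℕ) (l : ℕ) (hα : Antitone α) (ν : ℕ → ℕ)
    (G : Good α (l+1) ν) (r : ℕ) (hr : r ≤ l) (hr0 : ν (r+1) = 0)
    (U : ℕ → ℕ) (hU1 : ∀ j, ν (j+1) ≤ U j) (hU2 : ∀ j, U j ≤ ν j)
    (hUs : psum α l ≤ psum U (r+1)) (hUd : ∀ k, k ≤ r → psum α k ≤ psum U k) :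
    ∃ v : ℕ → ℕ, Antitone v ∧ (∀ j, l ≤ j → v j = 0) ∧ (∀ k, k ≤ l → psum α k ≤ psum v k) ∧
      psum v l = psum α l ∧ psum v (r+1) = psum α l ∧
      (∀ j, v j ≤ U j) ∧ (∀ j, ν (j+1) ≤ v j) ∧
      (v r = 0 ∨ ∀ j < r, v j = U j) := by
  have hz : ∀ j, r + 1 ≤ j → ν j = 0 := fun j hj => by
    have := G.anti hj; omega
  have shift : ∀ k, psum (fun j => ν (j+1)) k + ν 0 = psum ν (k+1) := by
    intro k
    induction k with
    | zero => simp [psum]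
    | succ k ih => rw [psum_succ, psum_succ ν (k+1)]; omega
  have hN : psum ν (r+1) = psum α (l+1) := by
    rw [← G.tot, psum_const_of_zero ν (r+1) hz (l+1) (by omega)]
  have hN2 : psum ν (r+1+1) = psum α (l+1) := by rw [psum_succ, hz (r+1) le_rfl, hN]; rfl
  have hs := psum_succ α l
  have h0 : α l ≤ ν 0 := by
    have h1 := G.dom 1 (by omega)
    simp [psum_succ, psum_zero] at h1
    exact le_trans (hα (Nat.zero_le l)) h1
  obtain ⟨t, ht, v, a1, a2, a3, a4, a5⟩ := greedy (fun j => ν (j+1)) U hU1 r (psum α l)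
    (by
      have h := shift (r+1)
      change psum (fun j => ν (j+1)) (r+1) ≤ _
      omega) hUs
  change psum v (r+1) = psum α l at a5
  have hvU : ∀ j, v j ≤ U j := by
    intro j
    rcases lt_trichotomy j t with h | h | h
    · exact (a1 j h).le
    · subst h; exact a4
    · rw [a2 j h]; exact hU1 j
  have hvL : ∀ j, ν (j+1) ≤ v j := by
    intro j
    rcases lt_trichotomy j t with h | h | h
    · rw [a1 j h]; exact hU1 j
    · subst h; exact a3
    · exact (a2 j h).ge
  have hvz : ∀ j, r + 1 ≤ j → v j = 0 := fun j hj => by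
    have := hvU j; have := hU2 j; have := hz j hj; omega
  have hdom : ∀ k, k ≤ l → psum α k ≤ psum v k := by
    intro k hk
    by_cases h1 : k ≤ t
    · rw [psum_congr v U k (fun j hj => a1 j (by omega))]
      exact hUd k (by omega)
    by_cases h2 : r + 1 ≤ k
    · rw [psum_const_of_zero v (r+1) hvz k h2, a5]
      exact psum_mono α hk
    · have key : ∀ m, k ≤ m → psum v m + psum ν (k+1) = psum v k + psum ν (m+1) := by
        intro m hm
        induction m, hm using Nat.le_induction with
        | base => rfl
        | succ m hm ih =>
          rw [psum_succ, psum_succ ν (m+1), a2 m (by omega)]; omega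
      have h3 := key (r+1) (by omega)
      have h4 := G.dom (k+1) (by omega)
      rw [psum_succ] at h4
      have h5 := hα hk
      omega
  have htot : psum v l = psum α l := by
    have h1 := hdom l le_rfl
    rcases Nat.lt_or_ge r l with h | h
    · rw [psum_const_of_zero v (r+1) hvz l h, a5]
    · have : r = l := by omega
      subst this
      rw [psum_succ] at a5; omega
  refine ⟨v, ?_, ?_, hdom, htot, a5, hvU, hvL, ?_⟩
  · apply antitone_nat_of_succ_le
    intro j
    exact le_trans (le_trans (hvU _) (hU2 _)) (hvL j)
  · intro j hj
    by_cases h : r + 1 ≤ j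
    · exact hvz j h
    · have : r = l := by omega
      have : j = l := by omega
      subst this
      subst r
      rw [psum_succ] at a5; omega
  · rcases Nat.lt_or_ge t r with h | h
    · left; rw [a2 r h, hr0]
    · right; intro j hj; exact a1 j (by omega)

/-- two excess rows are impossible -/
lemma two_excess (α : ℕ → ℕ) (l : ℕ) (hα : Antitone α) (h2 : ∀ j, j < l → 2 ≤ α j) (ν : ℕ → ℕ)
    (G : Good α (l+1) ν) (p q : ℕ) (hpq : p < q) (hq : q + 1 < l)
    (ep : psum α l < ν p + (l - 1 - p) + psum α p)
    (eq : psum α l < ν q + (l - 1 - q) + psum α q) : False := by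
  have h1 := G.dom p (by omega)
  have s1 := psum_succ ν p
  have s2 := psum_succ ν q
  have g1 := psum_grow 2 α (q+1) l (by omega) (fun j _ hj => h2 j hj)
  have s3 := psum_succ α q
  have h3 : 1 ≤ ν q := by omega
  have g2 := psum_grow 1 ν (p+1) q (by omega) (fun j _ hj => le_trans h3 (G.anti hj.le))
  have h4 := psum_mono ν (show q + 1 ≤ l + 1 by omega)
  have h5 := G.tot
  have s4 := psum_succ α l
  have h6 := hα (show q ≤ l by omega)
  omega

lemma main_step (α : ℕ → ℕ) (l : ℕ) (hl : 1 ≤ l) (hα : Antitone α) (h2 : ∀ j, j ≤ l → 2 ≤ α j)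
    (ν : ℕ → ℕ) (G : Good α (l+1) ν) (r : ℕ) (hrp : 0 < ν r) (hr0 : ν (r+1) = 0) :
    ∃ v : ℕ → ℕ, Good α l v ∧ (∀ j, v j ≤ ν j) ∧ (∀ j, ν (j+1) ≤ v j) ∧ v r < ν r ∧
      (v r = 0 ∨ Extra α l v r) ∧ (Extra α (l+1) ν r → ∃ i < r, v i < ν i) := by
  have hr : r ≤ l := by
    by_contra h
    have := G.supp r (by omega); omega
  have hz : ∀ j, r + 1 ≤ j → ν j = 0 := fun j hj => by
    have := G.anti hj; omega
  have hN : psum ν (r+1) = psum α (l+1) := by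
    rw [← G.tot, psum_const_of_zero ν (r+1) hz (l+1) (by omega)]
  have hN' := psum_succ ν r
  have hs := psum_succ α l
  have hd := h2 l le_rfl
  have grow : ∀ k, k ≤ l → psum α k + 2 * (l - k) ≤ psum α l := fun k hk =>
    psum_grow 2 α k l hk (fun j _ hj => h2 j hj.le)
  have hr1 : 1 ≤ r := by
    by_contra h
    have h0 : r = 0 := by omega
    subst h0
    have := G.cc 0 (by omega)
    simp [psum_zero] at *
    omega
  by_cases hE : ∃ i, i < r ∧ i + 1 < l ∧ psum α l < ν i + (l - 1 - i) + psum α i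
  · obtain ⟨i, hir, hil, he⟩ := hE
    obtain ⟨τ, hτ⟩ : ∃ τ, τ + (l - 1 - i) + psum α i = psum α l := by
      have := grow i (by omega)
      exact ⟨psum α l - psum α i - (l - 1 - i), by omega⟩
    have hτν : τ < ν i := by omega
    have hle : ν (i+1) ≤ τ := by
      have a1 := G.dom i (by omega)
      have a2 := psum_succ ν i
      have a3 := psum_succ ν (i+1)
      have a4 := psum_mono ν (show i + 1 + 1 ≤ l + 1 by omega)
      have a5 := G.tot
      have a6 := grow (i+1) (by omega)
      have a7 := psum_succ α i
      have a8 := hα (show i ≤ l by omega)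
      omega
    have hcc := G.cc i (by omega)
    obtain ⟨v, b1, b2, b3, b4, b5, b6, b7, b8⟩ := greedy_step α l hα ν G r hr hr0
      (Function.update ν i τ)
      (by
        intro j
        by_cases h : j = i
        · subst h; simpa using hle
        · rw [Function.update_of_ne h]; exact G.anti (Nat.le_succ j))
      (by
        intro j
        by_cases h : j = i
        · subst h; simpa using hτν.le
        · rw [Function.update_of_ne h])
      (by
        have := psum_update_gt ν i τ (r+1) (by omega)
        omega)
      (by
        intro k hk
        by_cases h : k ≤ i
        · rw [psum_update_lt _ _ _ _ h]; exact G.dom k (by omega)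
        · have c1 := psum_update_gt ν i τ k (by omega)
          have c2 := psum_grow 1 ν (i+1) k (by omega) (fun j _ hj => le_trans hrp (G.anti (by omega)))
          have c3 := psum_succ ν i
          have c4 := G.dom i (by omega)
          have c5 := grow k (by omega)
          omega)
    have hvi : v i ≤ τ := by simpa using b6 i
    have hvν : ∀ j, v j ≤ ν j := by
      intro j
      by_cases h : j = i
      · subst h; omega
      · have := b6 j
        rwa [Function.update_of_ne h] at this
    have GV : Good α l v := by
      refine ⟨b1, b2, b3, b4, ?_⟩
      intro j hj
      by_cases h : j = i
      · subst h; omega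
      · by_contra hc
        have := hvν j
        rcases Nat.lt_or_gt_of_ne h with h' | h'
        · exact two_excess α l hα (fun j hj => h2 j hj.le) ν G j i h' hil (by omega) he
        · exact two_excess α l hα (fun j hj => h2 j hj.le) ν G i j h' hj he (by omega)
    refine ⟨v, GV, hvν, b7, ?_, ?_, fun _ => ⟨i, hir, by omega⟩⟩
    · rcases b8 with h | h
      · omega
      · have c1 := psum_congr v _ r h
        have c2 := psum_update_gt ν i τ r hir
        have c3 := psum_succ v r
        omega
    · by_cases h0 : v r = 0
      · exact Or.inl h0
      · right
        have h := b8.resolve_left h0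
        have hvi' : v i = τ := by rw [h i hir]; simp
        have hrl : r < l := by
          by_contra hc
          exact h0 (b2 r (by omega))
        have c1 := b3 i (by omega)
        have c2 := psum_succ v i
        have c3 := psum_grow 1 v (i+1) r (by omega)
          (fun j _ hj => le_trans (Nat.pos_of_ne_zero h0) (b1 hj.le))
        have c4 := psum_succ v r
        have c5 := grow r hr
        have c6 := grow i (by omega)
        have c7 := psum_congr v _ r h
        have c8 := psum_update_gt ν i τ r hir
        refine ⟨hr1, ?_, by omega⟩
        by_cases hi : i = r - 1
        · rw [← hi]; omega
        · have := h (r-1) (by omega)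
          rw [Function.update_of_ne (by omega)] at this
          have := G.anti (show r - 1 ≤ r by omega)
          omega
  · have hE' : ∀ i, i < r → i + 1 < l → ν i + (l - 1 - i) + psum α i ≤ psum α l := by
      intro i h1 h3
      by_contra hc
      exact hE ⟨i, h1, h3, by omega⟩
    by_cases hd2 : ν r < α l
    · obtain ⟨v, b1, b2, b3, b4, b5, b6, b7, b8⟩ := greedy_step α l hα ν G r hr hr0
        ν (fun j => G.anti (Nat.le_succ j)) (fun j => le_rfl) (by omega)
        (fun k hk => G.dom k (by omega))
      have c3 := psum_succ v r
      have hv0 : v r = 0 := by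
        rcases b8 with h | h
        · exact h
        · have c1 := psum_congr v _ r h
          omega
      refine ⟨v, ⟨b1, b2, b3, b4, ?_⟩, b6, b7, by omega, Or.inl hv0, ?_⟩
      · intro i hi
        by_cases h : i < r
        · have := hE' i h hi
          have := b6 i
          omega
        · have := b1 (show r ≤ i by omega)
          have := grow i (by omega)
          omega
      · intro _
        by_contra hc
        push Not at hc
        have := psum_le ν v r hc
        omega
    · push Not at hd2
      by_cases hX : Extra α (l+1) ν r
      · have hrl : r < l := by
          by_contra hc
          have h : r = l := by omega
          subst h
          have := hX.slack
          omega
        have x1 := hX.slack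
        have x2 := hX.lt
        obtain ⟨p, rfl⟩ : ∃ p, r = p + 1 := ⟨r - 1, by omega⟩
        simp only [Nat.add_sub_cancel] at x2
        set v : ℕ → ℕ := Function.update (Function.update ν p (ν p - 1)) (p+1) (ν (p+1) - α l + 1)
          with hv
        have vr : v (p+1) = ν (p+1) - α l + 1 := by simp [hv]
        have vp : v p = ν p - 1 := by simp [hv]
        have vo : ∀ j, j ≠ p → j ≠ p + 1 → v j = ν j := by
          intro j h1 h3; simp [hv, h1, h3]
        have c0 : ∀ k, k ≤ p → psum v k = psum ν k := fun k hk =>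
          psum_congr _ _ _ (fun j hj => vo j (by omega) (by omega))
        have c1 := psum_succ v p
        have c2 := psum_succ v (p+1)
        have c3 := psum_succ ν p
        have c4 := c0 p le_rfl
        have hvz : ∀ j, p + 1 + 1 ≤ j → v j = 0 := fun j hj => by
          rw [vo j (by omega) (by omega)]; exact hz j hj
        have hvν : ∀ j, v j ≤ ν j := by
          intro j
          by_cases h1 : j = p
          · subst h1; omega
          by_cases h3 : j = p + 1
          · subst h3; omega
          rw [vo j h1 h3]
        have hvL : ∀ j, ν (j+1) ≤ v j := by
          intro j
          by_cases h1 : j = p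
          · subst h1; omega
          by_cases h3 : j = p + 1
          · subst h3; omega
          rw [vo j h1 h3]; exact G.anti (Nat.le_succ j)
        have htot : ∀ k, p + 1 + 1 ≤ k → psum v k = psum α l := by
          intro k hk
          rw [psum_const_of_zero v _ hvz k hk]; omega
        have GV : Good α l v := by
          refine ⟨antitone_nat_of_succ_le (fun j => le_trans (hvν _) (hvL j)),
            fun j hj => hvz j (by omega), ?_, htot l (by omega), ?_⟩
          · intro k hk
            by_cases h1 : k ≤ p
            · rw [c0 k h1]; exact G.dom k (by omega)
            by_cases h3 : k = p + 1
            · subst h3; omega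
            rw [htot k (by omega)]
            exact psum_mono α hk
          · intro i hi
            by_cases h1 : i < p + 1
            · have := hE' i h1 hi
              have := hvν i
              omega
            by_cases h3 : i = p + 1
            · subst h3; omega
            have := hvz i (by omega)
            have := grow i (by omega)
            omega
        refine ⟨v, GV, hvν, hvL, by omega, Or.inr ⟨hr1, ?_, by omega⟩, fun _ => ⟨p, by omega, by omega⟩⟩
        simp only [Nat.add_sub_cancel]; omega
      · set v : ℕ → ℕ := Function.update ν r (ν r - α l) with hv
        have vr : v r = ν r - α l := by simp [hv]
        have vo : ∀ j, j ≠ r → v j = ν j := by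
          intro j h1; simp [hv, h1]
        have c0 : ∀ k, k ≤ r → psum v k = psum ν k := fun k hk =>
          psum_congr _ _ _ (fun j hj => vo j (by omega))
        have c1 := psum_succ v r
        have c4 := c0 r le_rfl
        have hvz : ∀ j, r + 1 ≤ j → v j = 0 := fun j hj => by
          rw [vo j (by omega)]; exact hz j hj
        have hvν : ∀ j, v j ≤ ν j := by
          intro j
          by_cases h1 : j = r
          · subst h1; omega
          rw [vo j h1]
        have hvL : ∀ j, ν (j+1) ≤ v j := by
          intro j
          by_cases h1 : j = r
          · subst h1; omega
          rw [vo j h1]; exact G.anti (Nat.le_succ j)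
        have htot : ∀ k, r + 1 ≤ k → psum v k = psum α l := by
          intro k hk
          rw [psum_const_of_zero v _ hvz k hk]; omega
        have hdl := G.dom r (by omega)
        have hvl : r = l → v r = 0 := by
          intro h; subst h; omega
        have hvr : r < l → v r + (l - r) + psum α r ≤ psum α l := by
          intro h
          have := G.cc r (by omega)
          omega
        have hvz' : ∀ j, l ≤ j → v j = 0 := by
          intro j hj
          by_cases h : j = r
          · subst h; exact hvl (by omega)
          · exact hvz j (by omega)
        have GV : Good α l v := by
          refine ⟨antitone_nat_of_succ_le (fun j => le_trans (hvν _) (hvL j)), hvz', ?_, ?_, ?_⟩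
          · intro k hk
            by_cases h1 : k ≤ r
            · rw [c0 k h1]; exact G.dom k (by omega)
            rw [htot k (by omega)]
            exact psum_mono α hk
          · rw [← htot (l+1) (by omega), psum_succ, hvz' l le_rfl]; rfl
          · intro i hi
            by_cases h1 : i < r
            · have := hE' i h1 hi
              have := hvν i
              omega
            by_cases h3 : i = r
            · subst h3
              have := hvr (by omega)
              omega
            have := hvz i (by omega)
            have := grow i (by omega)
            omega
        refine ⟨v, GV, hvν, hvL, by omega, ?_, fun h => absurd h hX⟩
        by_cases h : r = l
        · exact Or.inl (hvl h)
        · right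
          have := hvr (by omega)
          refine ⟨hr1, ?_, by omega⟩
          rw [vo (r-1) (by omega)]
          have := G.anti (show r - 1 ≤ r by omega)
          omega

/-- chains of horizontal strips -/
structure Chain (α : ℕ → ℕ) (l : ℕ) (ν : ℕ → ℕ) (μ : ℕ → ℕ → ℕ) : Prop where
  zero : ∀ j, μ 0 j = 0
  top : μ l = ν
  mono : ∀ k, k < l → ∀ j, μ k j ≤ μ (k+1) j
  inter : ∀ k, k < l → ∀ j, μ (k+1) (j+1) ≤ μ k j
  size : ∀ k, k ≤ l → psum (μ k) l = psum α k
  desc : ∀ k, k + 1 < l → ∃ i j, i < j ∧ μ k i < μ (k+1) i ∧ μ (k+1) j < μ (k+2) j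

lemma exists_last (ν : ℕ → ℕ) (l : ℕ) (h : ∀ j, l ≤ j → ν j = 0) (h0 : 0 < ν 0) :
    ∃ r, 0 < ν r ∧ ν (r+1) = 0 := by
  by_contra hc
  push Not at hc
  have : ∀ j, 0 < ν j := by
    intro j
    induction j with
    | zero => exact h0
    | succ j ih => exact Nat.pos_of_ne_zero (hc j ih)
  have := this l
  have := h l le_rfl
  omega

lemma Chain.supp {α : ℕ → ℕ} {l : ℕ} {ν : ℕ → ℕ} {μ : ℕ → ℕ → ℕ} (h0 : ∀ j, μ 0 j = 0)
    (hi : ∀ k, k < l → ∀ j, μ (k+1) (j+1) ≤ μ k j) : ∀ k, k ≤ l → ∀ j, k ≤ j → μ k j = 0 := by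
  intro k
  induction k with
  | zero => intro _ j _; exact h0 j
  | succ k ih =>
    intro hk j hj
    obtain ⟨m, rfl⟩ : ∃ m, j = m + 1 := ⟨j - 1, by omega⟩
    have := hi k (by omega) m
    have := ih (by omega) m (by omega)
    omega

lemma exists_chain (α : ℕ → ℕ) (hα : Antitone α) (l : ℕ) (hl : 1 ≤ l) :
    (∀ j, j < l → 2 ≤ α j) → ∀ ν, Good α l ν →
    ∃ μ, Chain α l ν μ ∧ ∀ r, 0 < ν r → ν (r+1) = 0 → Extra α l ν r →
      ∃ i < r, μ (l-1) i < μ l i := by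
  induction l, hl using Nat.le_induction with
  | base =>
    intro h2 ν G
    refine ⟨fun k => if k = 0 then 0 else ν, ⟨by simp, by simp, ?_, ?_, ?_, ?_⟩, ?_⟩
    · intro k hk j; simp [show k = 0 by omega]
    · intro k hk j
      have := G.supp (j+1) (by omega)
      simp [show k = 0 by omega, this]
    · intro k hk
      rcases Nat.eq_zero_or_pos k with h | h
      · subst h; simp [psum]
      · have : k = 1 := by omega
        subst this; simpa using G.tot
    · intro k hk; omega
    · intro r h1 _ hX
      have := hX.pos
      have := G.supp r this
      omega
  | succ l hl ih =>
    intro h2 ν G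
    have h0 : 0 < ν 0 := by
      have h1 := G.dom 1 (by omega)
      simp [psum_succ, psum_zero] at h1
      have := h2 0 (by omega)
      omega
    obtain ⟨r, hrp, hr0⟩ := exists_last ν _ G.supp h0
    obtain ⟨v, GV, hvν, hvL, hvr, hX1, hX2⟩ := main_step α l hl hα (fun j hj => h2 j (by omega))
      ν G r hrp hr0
    obtain ⟨μ, C, hμ⟩ := ih (fun j hj => h2 j (by omega)) v GV
    have e : ∀ k, k ≤ l → Function.update μ (l+1) ν k = μ k := fun k hk =>
      Function.update_of_ne (by omega) _ _
    have e' : Function.update μ (l+1) ν (l+1) = ν := Function.update_self _ _ _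
    have sup := Chain.supp (α := α) (ν := v) C.zero C.inter
    refine ⟨Function.update μ (l+1) ν, ⟨?_, e', ?_, ?_, ?_, ?_⟩, ?_⟩
    · intro j; rw [e 0 (by omega)]; exact C.zero j
    · intro k hk j
      rcases Nat.lt_or_ge k l with h | h
      · rw [e k h.le, e (k+1) h]; exact C.mono k h j
      · have : k = l := by omega
        subst this
        rw [e k le_rfl, e', C.top]; exact hvν j
    · intro k hk j
      rcases Nat.lt_or_ge k l with h | h
      · rw [e k h.le, e (k+1) h]; exact C.inter k h j
      · have : k = l := by omega
        subst this
        rw [e k le_rfl, e', C.top]; exact hvL j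
    · intro k hk
      rcases Nat.lt_or_ge l k with h | h
      · have : k = l + 1 := by omega
        subst this
        rw [e']; exact G.tot
      · rw [e k h, psum_succ, C.size k h, sup k h l h]; rfl
    · intro k hk
      rcases Nat.lt_or_ge (k+1) l with h | h
      · rw [e k (by omega), e (k+1) h.le, e (k+2) h]; exact C.desc k h
      · have : l = k + 1 := by omega
        subst this
        rw [e k (by omega), e (k+1) le_rfl, e', C.top]
        by_cases hv0 : v r = 0
        · have s1 := C.size k (by omega)
          have s2 := C.size (k+1) le_rfl
          rw [C.top] at s2
          have s3 := psum_succ α k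
          have := h2 k (by omega)
          have : ∃ i, μ k i < v i := by
            by_contra hc
            push Not at hc
            have := psum_le v (μ k) (k+1) (fun j _ => hc j)
            omega
          obtain ⟨i, hi⟩ := this
          refine ⟨i, r, ?_, hi, hvr⟩
          by_contra hc
          have := GV.anti (show r ≤ i by omega)
          omega
        · obtain ⟨i, hi, hi'⟩ := hμ r (by omega) (by have := hvν (r+1); omega) (hX1.resolve_left hv0)
          rw [C.top] at hi'
          exact ⟨i, r, hi, hi', hvr⟩
    · intro r' h1 h3 hX
      have : r' = r := by
        rcases lt_trichotomy r' r with h | h | h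
        · have := G.anti (show r' + 1 ≤ r by omega); omega
        · exact h
        · have := G.anti (show r + 1 ≤ r' by omega); omega
      subst this
      obtain ⟨i, hi, hi'⟩ := hX2 hX
      refine ⟨i, hi, ?_⟩
      rw [e', Nat.add_sub_cancel, e l le_rfl, C.top]; exact hi'

/-- necessity, from a chain -/
lemma chain_cc (α : ℕ → ℕ) (l : ℕ) (h2 : ∀ j, j < l → 2 ≤ α j) (ν : ℕ → ℕ) (μ : ℕ → ℕ → ℕ)
    (C : Chain α l ν μ) (i : ℕ) (hil : i < l) (k : ℕ) (hk : i ≤ k) : k < l →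
    μ (k+1) i + (k - i) + psum α i ≤ psum α (k+1) ∧
    (¬ (μ k i < μ (k+1) i ∧ ∀ j < i, μ k j = μ (k+1) j) →
      μ (k+1) i + (k - i) + psum α i + 1 ≤ psum α (k+1)) := by
  have sup := Chain.supp (α := α) (ν := ν) C.zero C.inter
  have tot : ∀ k, k < l → ∑ j ∈ Finset.range l, (μ (k+1) j - μ k j) = α k := by
    intro k hk
    have h1 : psum (μ (k+1)) l = ∑ j ∈ Finset.range l, (μ (k+1) j - μ k j) + psum (μ k) l := by
      unfold psum
      rw [← Finset.sum_add_distrib]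
      apply Finset.sum_congr rfl
      intro j _
      have := C.mono k hk j
      omega
    rw [C.size _ hk, C.size _ hk.le, psum_succ] at h1
    omega
  have lt_l : ∀ k, k < l → ∀ j, μ k j ≠ μ (k+1) j → j < l := by
    intro k hk j hj
    by_contra hc
    have := sup k hk.le j (by omega)
    have := sup (k+1) hk j (by omega)
    omega
  -- one other cell
  have one : ∀ k, k < l → ∀ j, j ≠ i → μ k j ≠ μ (k+1) j → μ (k+1) i + 1 ≤ μ k i + α k := by
    intro k hk j hj hne
    have h1 := tot k hk
    have h3 : ∑ x ∈ ({i, j} : Finset ℕ), (μ (k+1) x - μ k x) ≤ α k := by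
      rw [← h1]
      apply Finset.sum_le_sum_of_subset
      intro x hx
      simp at hx
      have := lt_l k hk j hne
      rcases hx with rfl | rfl <;> simpa
    rw [Finset.sum_pair (Ne.symm hj)] at h3
    have := C.mono k hk j
    have := C.mono k hk i
    omega
  have two : ∀ k, k < l → ∀ j j', j < i → i < j' → μ k j ≠ μ (k+1) j → μ k j' ≠ μ (k+1) j' →
      μ (k+1) i + 2 ≤ μ k i + α k := by
    intro k hk j j' hj hj' hne hne'
    have h1 := tot k hk
    have h3 : ∑ x ∈ ({i, j, j'} : Finset ℕ), (μ (k+1) x - μ k x) ≤ α k := by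
      rw [← h1]
      apply Finset.sum_le_sum_of_subset
      intro x hx
      simp at hx
      have := lt_l k hk j hne
      have := lt_l k hk j' hne'
      rcases hx with rfl | rfl | rfl <;> simpa
    rw [Finset.sum_insert (by simp; omega), Finset.sum_pair (by omega)] at h3
    have := C.mono k hk j
    have := C.mono k hk i
    have := C.mono k hk j'
    omega
  have zero : ∀ k, k < l → μ (k+1) i ≤ μ k i + α k := by
    intro k hk
    have h1 := tot k hk
    have h3 := Finset.single_le_sum (f := fun j => μ (k+1) j - μ k j) (fun _ _ => Nat.zero_le _)
      (Finset.mem_range.mpr hil)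
    simp only [h1] at h3
    omega
  have A : ∀ k, k < l → ¬ (μ k i < μ (k+1) i ∧ ∀ j < i, μ k j = μ (k+1) j) →
      μ (k+1) i + 1 ≤ μ k i + α k := by
    intro k hk h
    by_cases h1 : μ k i < μ (k+1) i
    · push Not at h
      obtain ⟨j, hj, hne⟩ := h h1
      exact one k hk j (by omega) hne
    · have := h2 k hk; omega
  have B : ∀ k, k < l → ¬ (μ k i < μ (k+1) i ∧ ∀ j > i, μ k j = μ (k+1) j) →
      μ (k+1) i + 1 ≤ μ k i + α k := by
    intro k hk h
    by_cases h1 : μ k i < μ (k+1) i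
    · push Not at h
      obtain ⟨j, hj, hne⟩ := h h1
      exact one k hk j (by omega) hne
    · have := h2 k hk; omega
  have AB : ∀ k, k < l → ¬ (μ k i < μ (k+1) i ∧ ∀ j < i, μ k j = μ (k+1) j) →
      ¬ (μ k i < μ (k+1) i ∧ ∀ j > i, μ k j = μ (k+1) j) →
      μ (k+1) i + 2 ≤ μ k i + α k := by
    intro k hk h h'
    by_cases h1 : μ k i < μ (k+1) i
    · push Not at h h'
      obtain ⟨j, hj, hne⟩ := h h1
      obtain ⟨j', hj', hne'⟩ := h' h1
      exact two k hk j j' hj hj' hne hne'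
    · have := h2 k hk; omega
  induction k, hk using Nat.le_induction with
  | base =>
    intro hk
    have h0 := sup i hil.le i le_rfl
    rw [psum_succ]
    have := zero i hk
    refine ⟨by omega, fun h => ?_⟩
    have := A i hk h
    omega
  | succ k hk ih =>
    intro hk'
    obtain ⟨h1, h3⟩ := ih (by omega)
    have s := psum_succ α (k+1)
    by_cases hL : μ k i < μ (k+1) i ∧ ∀ j < i, μ k j = μ (k+1) j
    · have hF : ¬ (μ (k+1) i < μ (k+1+1) i ∧ ∀ j > i, μ (k+1) j = μ (k+1+1) j) := by
        rintro ⟨_, hF⟩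
        obtain ⟨p, q, hpq, hp, hq⟩ := C.desc k hk'
        change _ < μ (k+1+1) q at hq
        have e1 : ¬ p < i := fun h => by have := hL.2 p h; omega
        have e2 : ¬ q > i := fun h => by have := hF q h; omega
        omega
      have := B (k+1) hk' hF
      refine ⟨by omega, fun h => ?_⟩
      have := AB (k+1) hk' h hF
      omega
    · have := h3 hL
      have := zero (k+1) hk'
      refine ⟨by omega, fun h => ?_⟩
      have := A (k+1) hk' h
      omega

lemma chain_dom (α : ℕ → ℕ) (l : ℕ) (ν : ℕ → ℕ) (μ : ℕ → ℕ → ℕ)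
    (C : Chain α l ν μ) (k : ℕ) (hk : k ≤ l) : psum α k ≤ psum ν k := by
  have sup := Chain.supp (α := α) (ν := ν) C.zero C.inter
  rw [← C.size k hk, psum_const_of_zero (μ k) k (sup k hk) l hk]
  apply psum_le
  intro j _
  rw [← C.top]
  have : ∀ m, k ≤ m → m ≤ l → μ k j ≤ μ m j := by
    intro m hm
    induction m, hm using Nat.le_induction with
    | base => intro _; exact le_rfl
    | succ m hm ih => intro h; exact le_trans (ih (by omega)) (C.mono m h j)
  exact this l hk le_rfl

/-- the list as a function -/
def fn (a : List ℕ) : ℕ → ℕ := fun j => a.getD j 0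

lemma take_sum (a : List ℕ) (k : ℕ) : (a.take k).sum = psum (fn a) k := by
  induction k generalizing a with
  | zero => simp [psum]
  | succ k ih =>
    cases a with
    | nil => simp [psum, fn]
    | cons x a =>
      simp only [List.take_succ_cons, List.sum_cons, ih]
      simp [psum, fn, Finset.sum_range_succ' _ k]
      omega

lemma sum_eq_psum (a : List ℕ) : a.sum = psum (fn a) a.length := by
  rw [← take_sum, List.take_length]

lemma fn_zero (a : List ℕ) (j : ℕ) (h : a.length ≤ j) : fn a j = 0 := by
  simp [fn, h]

lemma fn_anti (a : List ℕ) (h : IsPartition a) : Antitone (fn a) := by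
  intro i j hij
  rcases Nat.lt_or_ge j a.length with hj | hj
  · rcases Nat.eq_or_lt_of_le hij with h1 | h1
    · subst h1; exact le_rfl
    · have := List.pairwise_iff_getElem.mp h.1 i j (by omega) hj h1
      simp [fn, hj, show i < a.length by omega]
      exact this
  · rw [fn_zero a j hj]; exact Nat.zero_le _

lemma fn_ge (a : List ℕ) (m : ℕ) (h : PartsGE a m) (j : ℕ) (hj : j < a.length) : m ≤ fn a j := by
  simp [fn, hj]
  exact h _ (List.getElem_mem hj)

lemma fn_le_sum (a : List ℕ) (j : ℕ) : fn a j ≤ a.sum := by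
  rcases Nat.lt_or_ge j a.length with hj | hj
  · rw [sum_eq_psum]
    have h1 := psum_succ (fn a) j
    have h2 := psum_mono (fn a) (show j + 1 ≤ a.length by omega)
    omega
  · rw [fn_zero a j hj]; exact Nat.zero_le _

lemma mem_cells (nu : List ℕ) (x : ℕ × ℕ) : x ∈ cells nu ↔ x.2 < fn nu x.1 := by
  unfold cells
  simp only [Finset.mem_filter, Finset.mem_product, Finset.mem_range]
  constructor
  · exact fun h => h.2
  · intro h
    refine ⟨⟨?_, ?_⟩, h⟩
    · by_contra hc
      rw [fn_zero nu x.1 (by omega)] at h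
      omega
    · have := fn_le_sum nu x.1
      omega

lemma card_cells (nu : List ℕ) (p : ℕ × ℕ → Prop) [DecidablePred p] (J : ℕ)
    (hJ : ∀ j, J ≤ j → fn nu j = 0) :
    ((cells nu).filter p).card =
      psum (fun j => ((Finset.range (fn nu j)).filter (fun c => p (j, c))).card) J := by
  unfold psum
  rw [Finset.card_eq_sum_card_fiberwise (f := Prod.fst) (t := Finset.range J)]
  · apply Finset.sum_congr rfl
    intro j _
    symm
    apply Finset.card_bij (fun c _ => (j, c))
    · intro c hc
      simp at hc
      simp [mem_cells, hc]
    · intro c _ c' _ h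
      simpa using h
    · rintro ⟨j', c⟩ hx
      simp [mem_cells] at hx
      obtain ⟨⟨h1, h2⟩, rfl⟩ := hx
      exact ⟨c, by simp [h1, h2], rfl⟩
  · intro x hx
    simp [mem_cells] at hx
    simp
    by_contra hc
    rw [hJ x.1 (by omega)] at hx
    omega

lemma card_cells_all (nu : List ℕ) : (cells nu).card = nu.sum := by
  have h := card_cells nu (fun _ => True) nu.length (fn_zero nu)
  simp at h
  rw [h, sum_eq_psum]

/-- for a standard tableau, each value is attained exactly once -/
lemma syt_unique (nu : List ℕ) (U : ℕ × ℕ → ℕ) (h : IsTab nu (List.replicate nu.sum 1) U) :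
    (∀ x ∈ cells nu, ∀ y ∈ cells nu, U x = U y → x = y) ∧
    (∀ x ∈ cells nu, 1 ≤ U x ∧ U x ≤ nu.sum) ∧
    (∀ n, 1 ≤ n → n ≤ nu.sum → ∃ x ∈ cells nu, U x = n) := by
  obtain ⟨-, h1, -, -, h5⟩ := h
  have hk : ∀ k, k < nu.sum → ((cells nu).filter (fun x => U x = k + 1)).card = 1 := by
    intro k hk
    rw [h5 k]; simp [hk]
  have hk' : ∀ k, nu.sum ≤ k → ((cells nu).filter (fun x => U x = k + 1)).card = 0 := by
    intro k hk
    rw [h5 k]; simp [hk]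
  have hle : ∀ x ∈ cells nu, 1 ≤ U x ∧ U x ≤ nu.sum := by
    intro x hx
    refine ⟨h1 x hx, ?_⟩
    by_contra hc
    have := hk' (U x - 1) (by omega)
    rw [Finset.card_eq_zero] at this
    have h2 : x ∈ (cells nu).filter (fun y => U y = U x - 1 + 1) := by
      have := h1 x hx
      simp [hx]; omega
    rw [this] at h2
    simp at h2
  refine ⟨?_, hle, ?_⟩
  · intro x hx y hy hxy
    have := hle x hx
    have h3 := hk (U x - 1) (by omega)
    rw [Finset.card_eq_one] at h3
    obtain ⟨z, hz⟩ := h3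
    have hx' : x ∈ (cells nu).filter (fun y => U y = U x - 1 + 1) := by
      simp [hx]; omega
    have hy' : y ∈ (cells nu).filter (fun y => U y = U x - 1 + 1) := by
      simp [hy]; omega
    rw [hz] at hx' hy'
    simp at hx' hy'
    rw [hx', hy']
  · intro n hn1 hn2
    have h3 := hk (n - 1) (by omega)
    have : 0 < ((cells nu).filter (fun x => U x = n - 1 + 1)).card := by omega
    obtain ⟨x, hx⟩ := Finset.card_pos.mp this
    simp at hx
    exact ⟨x, hx.1, by omega⟩

lemma syt_card_le (nu : List ℕ) (U : ℕ × ℕ → ℕ) (h : IsTab nu (List.replicate nu.sum 1) U)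
    (m : ℕ) (hm : m ≤ nu.sum) : ((cells nu).filter (fun x => U x ≤ m)).card = m := by
  obtain ⟨h1, h2, h3⟩ := syt_unique nu U h
  rw [show m = (Finset.Icc 1 m).card by simp]
  apply Finset.card_bij (fun x _ => U x)
  · intro x hx
    simp at hx
    simpa using ⟨(h2 x hx.1).1, hx.2⟩
  · intro x hx y hy
    simp at hx hy
    exact h1 x hx.1 y hy.1
  · intro n hn
    simp at hn
    obtain ⟨x, hx, hx'⟩ := h3 n hn.1 (by omega)
    exact ⟨x, by simp [hx, hx', hn.2], hx'⟩

/-- rows weakly decrease along a run without descents -/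
lemma run_anti (nu : List ℕ) (U : ℕ × ℕ → ℕ) (h : IsTab nu (List.replicate nu.sum 1) U)
    (p : ℕ) (x : ℕ × ℕ) (hx : x ∈ cells nu) (m : ℕ) (hm : U x ≤ m) :
    (∀ n, U x ≤ n → n < m → ¬ IsDescent nu U n) → ∀ y ∈ cells nu, U y = m → y.1 ≤ x.1 := by
  obtain ⟨h1, h2, h3⟩ := syt_unique nu U h
  induction m, hm using Nat.le_induction with
  | base =>
    intro _ y hy hy'
    rw [h1 y hy x hx hy']
  | succ m hm ih =>
    intro hd y hy hy'
    have := (h2 y hy).2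
    have := (h2 x hx).1
    obtain ⟨z, hz, hz'⟩ := h3 m (by omega) (by omega)
    have e1 := ih (fun n h h' => hd n h (by omega)) z hz hz'
    have e2 := hd m hm (by omega)
    by_contra hc
    exact e2 ⟨z, hz, y, hy, hz', hy', by omega⟩

lemma chain_of_syt (a nu : List ℕ) (h2 : PartsGE a 2) (hnu : IsPartition nu)
    (hsum : nu.sum = a.sum) (U : ℕ × ℕ → ℕ) (hU : IsTab nu (List.replicate nu.sum 1) U)
    (hD : ∀ n, IsDescent nu U n ↔ n ∈ Sset a) :
    ∃ μ, Chain (fn a) a.length (fn nu) μ := by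
  obtain ⟨h1, hle, h3⟩ := syt_unique nu U hU
  have hN : psum (fn a) a.length = nu.sum := by rw [hsum, sum_eq_psum]
  have sle : ∀ k, k ≤ a.length → psum (fn a) k ≤ nu.sum := fun k hk => by
    rw [← hN]; exact psum_mono _ hk
  set μ : ℕ → ℕ → ℕ := fun k j =>
    ((Finset.range (fn nu j)).filter (fun c => U (j, c) ≤ psum (fn a) k)).card with hμ
  have z : ∀ j, μ 0 j = 0 := by
    intro j
    simp only [hμ, Finset.card_eq_zero, Finset.filter_eq_empty_iff, psum_zero]
    intro c hc
    have := hle (j, c) (by rw [mem_cells]; simpa using hc)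
    omega
  have t : μ a.length = fn nu := by
    funext j
    simp only [hμ]
    rw [Finset.filter_true_of_mem]
    · simp
    · intro c hc
      rw [hN]
      exact (hle (j, c) (by rw [mem_cells]; simpa using hc)).2
  have noD : ∀ k, k < a.length → ∀ n, psum (fn a) k < n → n < psum (fn a) (k+1) →
      ¬ IsDescent nu U n := by
    intro k hk n hn1 hn2 hd
    rw [hD] at hd
    obtain ⟨q, hq0, hq, hq'⟩ := hd
    rw [take_sum] at hq'
    rcases Nat.lt_or_ge k q with h | h
    · have := psum_mono (fn a) (show k + 1 ≤ q from h)
      omega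
    · have := psum_mono (fn a) h
      omega
  have inter : ∀ k, k < a.length → ∀ j, μ (k+1) (j+1) ≤ μ k j := by
    intro k hk j
    apply Finset.card_le_card
    intro c hc
    simp at hc ⊢
    have hc' := fn_anti nu hnu (Nat.le_succ j)
    refine ⟨by have := hc.1; simp at hc'; omega, ?_⟩
    by_contra hcon
    have m1 : (j, c) ∈ cells nu := by rw [mem_cells]; simp at hc' ⊢; omega
    have m2 : (j+1, c) ∈ cells nu := by rw [mem_cells]; exact hc.1
    have lt := hU.2.2.2.1 j c m2
    have := run_anti nu U hU 0 (j, c) m1 (U (j+1, c)) lt.le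
      (fun n h h' => noD k hk n (by omega) (by omega)) (j+1, c) m2 rfl
    simp at this
  have sup := Chain.supp (α := fn a) (ν := fn nu) z inter
  have grow : ∀ k, k < a.length → ∀ x ∈ cells nu, psum (fn a) k < U x → U x ≤ psum (fn a) (k+1) →
      μ k x.1 < μ (k+1) x.1 := by
    intro k hk x hx hx1 hx2
    apply Finset.card_lt_card
    rw [Finset.ssubset_iff_of_subset]
    · refine ⟨x.2, ?_, ?_⟩
      · rw [mem_cells] at hx
        simp [hx, hx2]
      · simp; omega
    · intro c hc
      simp at hc ⊢
      have := psum_succ (fn a) k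
      omega
  refine ⟨μ, z, t, ?_, inter, ?_, ?_⟩
  · intro k hk j
    apply Finset.card_le_card
    intro c hc
    simp at hc ⊢
    have := psum_succ (fn a) k
    omega
  · intro k hk
    have h := card_cells nu (fun x => U x ≤ psum (fn a) k) a.length
      (fun j hj => by rw [← t]; exact sup a.length le_rfl j hj)
    rw [syt_card_le nu U hU _ (sle k hk)] at h
    exact h.symm
  · intro k hk
    have hd : IsDescent nu U (psum (fn a) (k+1)) := by
      rw [hD]
      exact ⟨k+1, by omega, hk, (take_sum _ _).symm⟩
    obtain ⟨x, hx, y, hy, hx', hy', hxy⟩ := hd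
    have s1 := psum_succ (fn a) k
    have s2 := psum_succ (fn a) (k+1)
    have g1 := fn_ge a 2 h2 k (by omega)
    have g2 := fn_ge a 2 h2 (k+1) (by omega)
    refine ⟨x.1, y.1, hxy, grow k (by omega) x hx (by omega) (by omega), ?_⟩
    exact grow (k+1) hk y hy (by omega) (by omega)

lemma syt_of_chain (a nu : List ℕ) (h2 : PartsGE a 2) (hnu : IsPartition nu)
    (hsum : nu.sum = a.sum) (μ : ℕ → ℕ → ℕ) (C : Chain (fn a) a.length (fn nu) μ) :
    ∃ U : ℕ × ℕ → ℕ, IsTab nu (List.replicate nu.sum 1) U ∧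
        ∀ n, IsDescent nu U n ↔ n ∈ Sset a := by
  classical
  set l := a.length with hl
  have hN : psum (fn a) l = nu.sum := by rw [hsum, sum_eq_psum]
  have sup := Chain.supp (α := fn a) (ν := fn nu) C.zero C.inter
  have supν : ∀ j, l ≤ j → fn nu j = 0 := fun j hj => by
    rw [← C.top]; exact sup l le_rfl j hj
  have mono : ∀ j k m, k ≤ m → m ≤ l → μ k j ≤ μ m j := by
    intro j k m hm
    induction m, hm using Nat.le_induction with
    | base => intro _; exact le_rfl
    | succ m hm ih => intro h; exact le_trans (ih (by omega)) (C.mono m h j)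
  have anti : ∀ k, k ≤ l → Antitone (μ k) := by
    intro k hk
    rcases Nat.lt_or_ge k l with h | h
    · exact antitone_nat_of_succ_le (fun j => le_trans (C.mono k h _) (C.inter k h j))
    · rw [show k = l by omega, C.top]; exact fn_anti nu hnu
  -- block index
  have hb : ∀ x : ℕ × ℕ, ∃ k, x ∈ cells nu → k < l ∧ μ k x.1 ≤ x.2 ∧ x.2 < μ (k+1) x.1 := by
    intro x
    by_cases hx : x ∈ cells nu
    · have hx' := hx
      rw [mem_cells, ← C.top] at hx'
      have hex : ∃ k, x.2 < μ k x.1 := ⟨l, hx'⟩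
      have f1 := Nat.find_spec hex
      have f2 : Nat.find hex ≤ l := Nat.find_min' hex hx'
      have f3 : Nat.find hex ≠ 0 := by
        intro h
        rw [h, C.zero] at f1
        omega
      refine ⟨Nat.find hex - 1, fun _ => ⟨by omega, ?_, ?_⟩⟩
      · exact not_lt.mp (Nat.find_min hex (show Nat.find hex - 1 < Nat.find hex by omega))
      · rw [show Nat.find hex - 1 + 1 = Nat.find hex by omega]; exact f1
    · exact ⟨0, fun h => absurd h hx⟩
  choose b hb using hb
  have blt : ∀ x ∈ cells nu, ∀ k, k ≤ l → (b x < k ↔ x.2 < μ k x.1) := by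
    intro x hx k hk
    obtain ⟨b1, b2, b3⟩ := hb x hx
    constructor
    · intro h
      exact lt_of_lt_of_le b3 (mono x.1 (b x + 1) k h hk)
    · intro h
      by_contra hc
      have := mono x.1 k (b x) (by omega) b1.le
      omega
  have strip : ∀ x ∈ cells nu, ∀ y ∈ cells nu, b x = b y → x.1 < y.1 → y.2 < x.2 := by
    intro x hx y hy hxy h
    obtain ⟨b1, b2, b3⟩ := hb x hx
    obtain ⟨c1, c2, c3⟩ := hb y hy
    rw [← hxy] at c3
    obtain ⟨m, hm⟩ : ∃ m, y.1 = m + 1 := ⟨y.1 - 1, by omega⟩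
    rw [hm] at c3
    have d1 := C.inter (b x) b1 m
    have d2 := anti (b x) b1.le (show x.1 ≤ m by omega)
    omega
  let lt : ℕ × ℕ → ℕ × ℕ → Prop := fun y x => b y < b x ∨ (b y = b x ∧ y.2 < x.2)
  have lt_trans : ∀ x y z, lt x y → lt y z → lt x z := by
    intro x y z h h'
    simp only [lt] at *
    omega
  have lt_irrefl : ∀ x, ¬ lt x x := by
    intro x h
    simp only [lt] at h
    omega
  have lt_total : ∀ x ∈ cells nu, ∀ y ∈ cells nu, x ≠ y → lt x y ∨ lt y x := by
    intro x hx y hy hne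
    by_contra hc
    simp only [lt] at hc
    have e1 : b x = b y := by omega
    have e2 : x.2 = y.2 := by omega
    have e3 : ¬ x.1 < y.1 := fun h => by
      have := strip x hx y hy e1 h; omega
    have e4 : ¬ y.1 < x.1 := fun h => by
      have := strip y hy x hx e1.symm h; omega
    exact hne (Prod.ext (by omega) e2)
  let V : ℕ × ℕ → ℕ := fun x => ((cells nu).filter (fun y => lt y x)).card + 1
  have V_lt : ∀ x ∈ cells nu, ∀ y ∈ cells nu, lt x y → V x < V y := by
    intro x hx y hy h
    simp only [V]
    have : ((cells nu).filter (fun z => lt z x)).card < ((cells nu).filter (fun z => lt z y)).card := by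
      apply Finset.card_lt_card
      rw [Finset.ssubset_iff_of_subset]
      · exact ⟨x, by simp [hx, h], by simp [lt_irrefl]⟩
      · intro z hz
        simp only [Finset.mem_filter] at hz ⊢
        exact ⟨hz.1, lt_trans _ _ _ hz.2 h⟩
    omega
  have V_lt' : ∀ x ∈ cells nu, ∀ y ∈ cells nu, V x < V y → lt x y := by
    intro x hx y hy h
    by_cases hxy : x = y
    · subst hxy; omega
    · rcases lt_total x hx y hy hxy with h' | h'
      · exact h'
      · have := V_lt y hy x hx h'; omega
  have V_inj : ∀ x ∈ cells nu, ∀ y ∈ cells nu, V x = V y → x = y := by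
    intro x hx y hy h
    by_contra hxy
    rcases lt_total x hx y hy hxy with h' | h'
    · have := V_lt x hx y hy h'; omega
    · have := V_lt y hy x hx h'; omega
  have V_le : ∀ x ∈ cells nu, 1 ≤ V x ∧ V x ≤ nu.sum := by
    intro x hx
    refine ⟨by simp only [V]; omega, ?_⟩
    simp only [V]
    rw [← card_cells_all nu]
    apply Finset.card_lt_card
    rw [Finset.ssubset_iff_of_subset (Finset.filter_subset _ _)]
    exact ⟨x, hx, by simp [lt_irrefl]⟩
  have V_surj : ∀ n, 1 ≤ n → n ≤ nu.sum → ∃ x ∈ cells nu, V x = n := by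
    intro n hn1 hn2
    have := Finset.surj_on_of_inj_on_of_card_le (s := cells nu) (t := Finset.Icc 1 nu.sum)
      (fun x _ => V x) (fun x hx => by simpa using V_le x hx)
      (fun x y hx hy h => V_inj x hx y hy h) (by rw [card_cells_all]; simp) n (by simp; omega)
    obtain ⟨x, hx, hx'⟩ := this
    exact ⟨x, hx, hx'.symm⟩
  have cnt : ∀ k, k ≤ l → ((cells nu).filter (fun x => b x < k)).card = psum (fn a) k := by
    intro k hk
    rw [← C.size k hk, Finset.filter_congr (q := fun x => x.2 < μ k x.1)
      (fun x hx => blt x hx k hk), card_cells nu (fun x => x.2 < μ k x.1) l supν]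
    apply psum_congr
    intro j _
    have h1 : μ k j ≤ fn nu j := by rw [← C.top]; exact mono j k l hk le_rfl
    have : (Finset.range (fn nu j)).filter (fun c => c < μ k j) = Finset.range (μ k j) := by
      ext c; simp; omega
    simp only [this, Finset.card_range]
  have V_b1 : ∀ x ∈ cells nu, psum (fn a) (b x) < V x := by
    intro x hx
    rw [← cnt (b x) (hb x hx).1.le]
    simp only [V]
    apply Nat.lt_succ_of_le
    apply Finset.card_le_card
    intro y hy
    simp only [Finset.mem_filter] at hy ⊢
    exact ⟨hy.1, Or.inl hy.2⟩
  have V_b2 : ∀ x ∈ cells nu, V x ≤ psum (fn a) (b x + 1) := by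
    intro x hx
    rw [← cnt (b x + 1) (hb x hx).1]
    simp only [V]
    apply Nat.succ_le_of_lt
    apply Finset.card_lt_card
    rw [Finset.ssubset_iff_of_subset]
    · exact ⟨x, by simp [hx], by simp [lt_irrefl]⟩
    · intro y hy
      simp only [Finset.mem_filter] at hy ⊢
      refine ⟨hy.1, ?_⟩
      have := hy.2
      simp only [lt] at this
      omega
  let U : ℕ × ℕ → ℕ := fun x => if x ∈ cells nu then V x else 0
  have UV : ∀ x ∈ cells nu, U x = V x := fun x hx => by simp [U, hx]
  have tab : IsTab nu (List.replicate nu.sum 1) U := by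
    refine ⟨fun x hx => by simp [U, hx], fun x hx => by rw [UV x hx]; exact (V_le x hx).1, ?_, ?_, ?_⟩
    · intro i c h
      have h' : (i, c) ∈ cells nu := by
        rw [mem_cells] at h ⊢; simp at h ⊢; omega
      rw [UV _ h, UV _ h']
      apply (V_lt _ h' _ h _).le
      have e1 := (hb _ h).1
      have e2 := (hb _ h).2.2
      have e3 := (blt _ h' (b (i, c+1) + 1) e1).mpr (by simp at e2 ⊢; omega)
      simp only [lt]; omega
    · intro i c h
      have h' : (i, c) ∈ cells nu := by
        have := fn_anti nu hnu (Nat.le_succ i)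
        rw [mem_cells] at h ⊢; simp at h this ⊢; omega
      rw [UV _ h, UV _ h']
      apply V_lt _ h' _ h
      have e1 := (hb _ h).1
      have e2 := (hb _ h).2.2
      have e3 := C.inter _ e1 i
      have e4 := (blt _ h' (b (i+1, c)) e1.le).mpr (by simp at e2 ⊢; omega)
      exact Or.inl e4
    · intro k
      by_cases hk : k < nu.sum
      · obtain ⟨x, hx, hx'⟩ := V_surj (k+1) (by omega) (by omega)
        have : (cells nu).filter (fun x => U x = k + 1) = {x} := by
          ext y
          simp only [Finset.mem_filter, Finset.mem_singleton]
          constructor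
          · rintro ⟨hy, hy'⟩
            rw [UV y hy] at hy'
            exact V_inj y hy x hx (by omega)
          · rintro rfl
            exact ⟨hx, by rw [UV _ hx]; exact hx'⟩
        rw [this]; simp [hk]
      · have : (cells nu).filter (fun x => U x = k + 1) = ∅ := by
          rw [Finset.filter_eq_empty_iff]
          intro y hy
          rw [UV y hy]
          have := V_le y hy
          omega
        rw [this]; simp [not_lt.mp hk]
  refine ⟨U, tab, ?_⟩
  intro n
  constructor
  · rintro ⟨x, hx, y, hy, hx', hy', hxy⟩
    rw [UV _ hx] at hx'
    rw [UV _ hy] at hy'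
    have h1 := V_lt' x hx y hy (by omega)
    have hby : b x < b y := by
      rcases h1 with h | ⟨h, h'⟩
      · exact h
      · have := strip x hx y hy h hxy
        omega
    have e1 := V_b1 y hy
    have e2 := V_b2 x hx
    have e3 := psum_mono (fn a) (show b x + 1 ≤ b y from hby)
    exact ⟨b y, by omega, (hb y hy).1, by rw [take_sum]; omega⟩
  · rintro ⟨k, hk0, hkl, rfl⟩
    rw [take_sum]
    obtain ⟨m, rfl⟩ : ∃ m, k = m + 1 := ⟨k - 1, by omega⟩
    rw [← hl] at hkl
    have s1 := psum_succ (fn a) m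
    have s2 := psum_succ (fn a) (m+1)
    have g1 := fn_ge a 2 h2 m (by omega)
    have g2 := fn_ge a 2 h2 (m+1) (by omega)
    have g3 := psum_mono (fn a) (show m + 1 + 1 ≤ l by omega)
    obtain ⟨x, hx, hx'⟩ := V_surj (psum (fn a) (m+1)) (by omega) (by omega)
    obtain ⟨y, hy, hy'⟩ := V_surj (psum (fn a) (m+1) + 1) (by omega) (by omega)
    have bx : b x = m := by
      have e1 := V_b1 x hx
      have e2 := V_b2 x hx
      rcases lt_trichotomy (b x) m with h | h | h
      · have := psum_mono (fn a) (show b x + 1 ≤ m from h); omega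
      · exact h
      · have := psum_mono (fn a) (show m + 1 ≤ b x from h); omega
    have bY : b y = m + 1 := by
      have e1 := V_b1 y hy
      have e2 := V_b2 y hy
      rcases lt_trichotomy (b y) (m+1) with h | h | h
      · have := psum_mono (fn a) (show b y + 1 ≤ m + 1 from h); omega
      · exact h
      · have := psum_mono (fn a) (show m + 1 + 1 ≤ b y from h); omega
    obtain ⟨i, j, hij, hi, hj⟩ := C.desc m hkl
    have cell : ∀ k, k < l → ∀ i, μ k i < μ (k+1) i → (i, μ k i) ∈ cells nu ∧ b (i, μ k i) = k := by
      intro k hk i hi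
      have hc : (i, μ k i) ∈ cells nu := by
        rw [mem_cells, ← C.top]
        exact lt_of_lt_of_le hi (mono i (k+1) l hk le_rfl)
      refine ⟨hc, ?_⟩
      have e1 := (blt _ hc (k+1) hk).mpr hi
      have e2 := (blt _ hc k hk.le).not.mpr (by simp)
      omega
    obtain ⟨p1, p2⟩ := cell m (by omega) i hi
    obtain ⟨q1, q2⟩ := cell (m+1) hkl j hj
    have xi : x.1 ≤ i := by
      by_contra hc
      have e1 := strip _ p1 x hx (by rw [p2, bx]) (by simpa using hc)
      have e2 := V_lt x hx _ p1 (Or.inr ⟨by rw [p2, bx], e1⟩)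
      have e3 := V_b2 _ p1
      rw [p2] at e3
      omega
    have yj : j ≤ y.1 := by
      by_contra hc
      have e1 := strip y hy _ q1 (by rw [q2, bY]) (by simpa using hc)
      have e2 := V_lt _ q1 y hy (Or.inr ⟨by rw [q2, bY], e1⟩)
      have e3 := V_b1 _ q1
      rw [q2] at e3
      omega
    exact ⟨x, hx, y, hy, by rw [UV x hx, hx'], by rw [UV y hy, hy'], by omega⟩

lemma drop_sum (a : List ℕ) (i : ℕ) : (a.drop i).sum + psum (fn a) i = a.sum := by
  rw [← take_sum, ← List.sum_take_add_sum_drop a i]; omega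

/-- for a partition `a` with parts ≥ 2 of length `ℓ` and a partition `nu`
of `|a|`, there is a standard Young tableau of shape `nu` with descent set exactly
`S(a) = {a₁, a₁+a₂, …, a₁+⋯+a_{ℓ-1}}` iff `nu ∈ [a, (|a|-ℓ+1, ℓ-1)]` and
`ν_i ≤ Σ_{q=i}^{ℓ} a_q − (ℓ−i)` for every `1 ≤ i ≤ ℓ−1`. -/
theorem syt_with_descent_set_S_iff
    (a nu : List ℕ) (ha : IsPartition a) (h2 : PartsGE a 2)
    (hnu : IsPartition nu) (hsum : nu.sum = a.sum) :
    (∃ U : ℕ × ℕ → ℕ, IsTab nu (List.replicate nu.sum 1) U ∧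
        ∀ n, IsDescent nu U n ↔ n ∈ Sset a) ↔
      (DomLE a nu ∧ DomLE nu [a.sum - (a.length - 1), a.length - 1] ∧
        ∀ i, i + 1 < a.length → nu.getD i 0 + (a.length - 1 - i) ≤ (a.drop i).sum) := by
  constructor
  · rintro ⟨U, hU, hD⟩
    obtain ⟨μ, C⟩ := chain_of_syt a nu h2 hnu hsum U hU hD
    have hN : psum (fn a) a.length = a.sum := (sum_eq_psum a).symm
    have supν : ∀ j, a.length ≤ j → fn nu j = 0 := fun j hj => by
      rw [← C.top]
      exact Chain.supp (α := fn a) (ν := fn nu) C.zero C.inter a.length le_rfl j hj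
    have hcc : ∀ i, i + 1 < a.length →
        nu.getD i 0 + (a.length - 1 - i) ≤ (a.drop i).sum := by
      intro i hi
      have h := (chain_cc (fn a) a.length (fn_ge a 2 h2) (fn nu) μ C i (by omega)
        (a.length - 1) (by omega) (by omega)).1
      rw [show a.length - 1 + 1 = a.length by omega, C.top] at h
      have := drop_sum a i
      change fn nu i + _ ≤ _
      omega
    have hpn : ∀ k, psum (fn nu) k ≤ nu.sum := by
      intro k
      rw [← take_sum]
      exact (List.take_sublist k nu).sum_le_sum (fun _ _ => Nat.zero_le _)
    have hlen : a.length ≤ a.sum := by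
      have := psum_grow 1 (fn a) 0 a.length (by omega)
        (fun j _ hj => le_trans (by omega) (fn_ge a 2 h2 j hj))
      omega
    refine ⟨⟨hsum.symm, ?_⟩, ⟨by simp; omega, ?_⟩, hcc⟩
    · intro i
      rw [take_sum, take_sum]
      rcases Nat.le_total i a.length with h | h
      · exact chain_dom _ _ _ _ C i h
      · rw [psum_const_of_zero (fn a) a.length (fn_zero a) i h,
          psum_const_of_zero (fn nu) a.length supν i h]
        exact chain_dom _ _ _ _ C _ le_rfl
    · intro i
      rw [take_sum]
      match i with
      | 0 => simp [psum]
      | 1 =>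
        simp only [List.take_succ_cons, List.take_zero, List.sum_cons, List.sum_nil]
        have h1 := hpn 1
        rw [psum_succ, psum_zero] at h1 ⊢
        by_cases hl : 0 + 1 < a.length
        · have := hcc 0 hl
          change fn nu 0 + _ ≤ _ at this
          simp at this
          omega
        · omega
      | i + 2 =>
        have := hpn (i + 2)
        simp
        omega
  · rintro ⟨⟨-, hdom⟩, -, hcc⟩
    have hdom' : ∀ k, psum (fn a) k ≤ psum (fn nu) k := fun k => by
      rw [← take_sum, ← take_sum]; exact hdom k
    have hN : psum (fn a) a.length = a.sum := (sum_eq_psum a).symm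
    have hpn : ∀ k, psum (fn nu) k ≤ nu.sum := by
      intro k
      rw [← take_sum]
      exact (List.take_sublist k nu).sum_le_sum (fun _ _ => Nat.zero_le _)
    have htot : psum (fn nu) a.length = psum (fn a) a.length := by
      have := hdom' a.length
      have := hpn a.length
      omega
    have supν : ∀ j, a.length ≤ j → fn nu j = 0 := by
      intro j hj
      have e1 := hpn (j+1)
      rw [psum_succ] at e1
      have e2 := psum_mono (fn nu) hj
      omega
    have G : Good (fn a) a.length (fn nu) := by
      refine ⟨fn_anti nu hnu, supν, fun k _ => hdom' k, htot, ?_⟩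
      intro i hi
      have e1 := hcc i hi
      change fn nu i + _ ≤ _ at e1
      have e2 := drop_sum a i
      omega
    rcases Nat.eq_zero_or_pos a.length with h0 | hpos
    · refine syt_of_chain a nu h2 hnu hsum (fun _ => fn nu) ?_
      have z : ∀ j, fn nu j = 0 := fun j => supν j (by omega)
      refine ⟨z, rfl, fun k hk => by omega, fun k hk => by omega, ?_, fun k hk => by omega⟩
      intro k hk
      rw [h0] at hk ⊢
      simp [psum, show k = 0 by omega]
    · obtain ⟨μ, C, -⟩ := exists_chain (fn a) (fn_anti a ha) a.length hpos (fn_ge a 2 h2)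
        (fn nu) G
      exact syt_of_chain a nu h2 hnu hsum μ C

end RibbonSupport
end
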